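/- arXiv:2203.01258 — 2 statements merged into one kernel-verified Lean document; each statement's English description precedes it below -/
import Mathlib

section
/- Let A be a standard-graded Artinian Gorenstein algebra with linear form ℓ. Then the pair (A, ℓ) is strong Lefschetz (i.e., the maps ℓ^{j-2i}: A_i → A_{j-i} are bijective for all 0 ≤ i ≤ ⌊j/2⌋, where j is the socle degree) if and only if the Jordan type partition P_{A,ℓ} of the nilpotent multiplication map ℓ: A → A equals the conjugate partition of the Hilbert function T(A) reordered as a partition. -/
/- Common background: standard graded Artinian (Gorenstein) quotients of a
polynomial ring, their graded pieces, Hilbert function, socle degree,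
Lefschetz-type conditions, and Macaulay contraction duality. -/

noncomputable section
open MvPolynomial
open scoped Classical

variable {K : Type*} [Field K] {n : ℕ}

/-- The degree-`i` graded component of `R/I`: the image in the quotient of the
homogeneous polynomials of degree `i`. -/
def gradedPiece (I : Ideal (MvPolynomial (Fin n) K)) (i : ℕ) :
    Submodule K (MvPolynomial (Fin n) K ⧸ I) :=
  (homogeneousSubmodule (Fin n) K i).map (Ideal.Quotient.mkₐ K I).toLinearMap

/-- The Hilbert function of `R/I`. -/
def hilbFn (I : Ideal (MvPolynomial (Fin n) K)) (i : ℕ) : ℕ :=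
  Module.finrank K (gradedPiece I i)

/-- `I` is a homogeneous ideal. -/
def IsHomogIdeal (I : Ideal (MvPolynomial (Fin n) K)) : Prop :=
  ∀ p ∈ I, ∀ i, homogeneousComponent i p ∈ I

/-- The socle of `R/I`: elements killed by every variable. -/
def socleSub (I : Ideal (MvPolynomial (Fin n) K)) :
    Submodule K (MvPolynomial (Fin n) K ⧸ I) :=
  ⨅ v : Fin n, LinearMap.ker (LinearMap.mulLeft K (Ideal.Quotient.mk I (X v)))

/-- `R/I` is a standard graded Artinian Gorenstein algebra. -/
def IsAG (I : Ideal (MvPolynomial (Fin n) K)) : Prop :=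
  IsHomogIdeal I ∧ I ≠ ⊤ ∧ FiniteDimensional K (MvPolynomial (Fin n) K ⧸ I) ∧
    Module.finrank K (socleSub I) = 1

/-- The socle degree: the top degree with nonzero component. -/
def socDeg (I : Ideal (MvPolynomial (Fin n) K)) : ℕ :=
  sSup {i | hilbFn I i ≠ 0}

/-- Multiplication by `ℓ ^ d` maps `A_u` bijectively onto `A_v`. -/
def PowMulBij (I : Ideal (MvPolynomial (Fin n) K)) (ℓ : MvPolynomial (Fin n) K ⧸ I)
    (d u v : ℕ) : Prop :=
  (∀ a ∈ gradedPiece I u, ℓ ^ d * a = 0 → a = 0) ∧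
  (∀ b ∈ gradedPiece I v, ∃ a ∈ gradedPiece I u, ℓ ^ d * a = b)

/-- `(A, ℓ)` is a strong Lefschetz pair: `ℓ^(j-2i) : A_i → A_(j-i)` is bijective
for all `0 ≤ i ≤ ⌊j/2⌋`, `j` the socle degree. -/
def SLPair (I : Ideal (MvPolynomial (Fin n) K)) (ℓ : MvPolynomial (Fin n) K ⧸ I) : Prop :=
  ∀ i, 2 * i ≤ socDeg I → PowMulBij I ℓ (socDeg I - 2 * i) i (socDeg I - i)

/-- `A = R/I` has the strong Lefschetz property. -/
def StrongLefschetz (I : Ideal (MvPolynomial (Fin n) K)) : Prop :=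
  ∃ ℓ ∈ gradedPiece I 1, SLPair I ℓ

/-- Contraction of `F` by the monomial `x^d`. -/
def contractMon (d : Fin n →₀ ℕ) (F : MvPolynomial (Fin n) K) : MvPolynomial (Fin n) K :=
  ∑ e ∈ F.support, if d ≤ e then monomial (e - d) (coeff e F) else 0

/-- Contraction action of a polynomial `p` on `F` (Macaulay duality pairing). -/
def contract (p F : MvPolynomial (Fin n) K) : MvPolynomial (Fin n) K :=
  ∑ d ∈ p.support, coeff d p • contractMon d F

/-- `P` is the Jordan type of multiplication by `ℓ` on `A = R/I`: the multiset of
Jordan block sizes, characterized by `dim ker(ℓ^m) = Σ_i min(P_i, m)` for all `m`. -/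
def IsJordanTypeOf (I : Ideal (MvPolynomial (Fin n) K)) (ℓ : MvPolynomial (Fin n) K ⧸ I)
    (P : Multiset ℕ) : Prop :=
  (0 ∉ P) ∧ P.sum = Module.finrank K (MvPolynomial (Fin n) K ⧸ I) ∧
  ∀ m : ℕ, Module.finrank K (LinearMap.ker ((LinearMap.mulLeft K ℓ) ^ m)) =
    (P.map fun t => min t m).sum

/-- The conjugate of a multiset of natural numbers (viewed as a partition):
the `i`-th part of the conjugate counts the parts of `M` that are `≥ i`. -/
def conjMultiset (M : Multiset ℕ) : Multiset ℕ :=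
  (Multiset.range M.sup).map fun i => M.countP fun t => i < t

/-- The Hilbert function of `A = R/I` collected as a multiset (its reordering
as a partition being immaterial for multiset equality). -/
def hilbMultiset (I : Ideal (MvPolynomial (Fin n) K)) : Multiset ℕ :=
  (Multiset.range (socDeg I + 1)).map (hilbFn I)

/- Let `h` be the Hilbert function of a graded space and `f` an endomorphism of degree one. The
restriction of `f ^ m` to degree `i` has nullity at least `h i - h (i + m)` (truncated at zero),
with equality precisely when it has maximal rank. If all these nullities are minimal, then `h` is
unimodal, so each superlevel set `{h > t}` of size `s` contains exactly `min s m` indices that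
leave it under a shift by `m`; summing over `t` shows that the Jordan type of `f` is the conjugate
of `h`. Conversely, if the Jordan type is this conjugate, then `f` has `max h` Jordan blocks; the
nullity of `f` bounds the total descent of `h`, so `h` is unimodal, and the same count gives
equality in the nullity bound of every `f ^ m` in every degree. Finally, since the Hilbert function
of a Gorenstein algebra is symmetric, the maps between complementary degrees are bijective if and
only if all powers have maximal rank. -/

section Conjugate

open Finset

lemma zero_notMem_conjMultiset (M : Multiset ℕ) : 0 ∉ conjMultiset M := by
  simp only [conjMultiset, Multiset.mem_map, Multiset.mem_range, not_exists, not_and]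
  intro t ht h0
  refine ht.not_ge (Multiset.sup_le.2 fun x hx => not_lt.1 ?_)
  exact Multiset.countP_eq_zero.1 h0 x hx

lemma sum_min_one_conjMultiset (M : Multiset ℕ) :
    ((conjMultiset M).map fun t => min t 1).sum = M.sup := by
  have hmin : ∀ t ∈ conjMultiset M, min t 1 = 1 := fun t ht =>
    min_eq_right (Nat.one_le_iff_ne_zero.2 (ne_of_mem_of_not_mem ht (zero_notMem_conjMultiset M)))
  rw [Multiset.map_congr rfl hmin, Multiset.map_const', Multiset.sum_replicate, smul_eq_mul,
    mul_one, conjMultiset, Multiset.card_map, Multiset.card_range]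

variable {ι : Type*} (s : Finset ι) (h : ι → ℕ)

lemma conjMultiset_map :
    conjMultiset (s.val.map h) = (range (s.sup h)).val.map fun t => #{i ∈ s | t < h i} :=
  Multiset.map_congr rfl fun t _ => Multiset.countP_map h s.val fun x => t < x

/- Double counting of the pairs `(i, t)` with `g i ≤ t < h i`. -/
lemma sum_tsub_eq_sum_card_filter (g : ι → ℕ) :
    ∑ i ∈ s, (h i - g i) = ∑ t ∈ range (s.sup h), #{i ∈ s | g i ≤ t ∧ t < h i} := by
  have hcount : ∀ i ∈ s, h i - g i = #{t ∈ range (s.sup h) | g i ≤ t ∧ t < h i} := by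
    intro i hi
    have hle : h i ≤ s.sup h := le_sup hi
    rw [← Nat.card_Ico]
    congr 1
    ext t
    simp only [mem_Ico, mem_filter, mem_range]
    omega
  rw [sum_congr rfl hcount]
  exact sum_card_bipartiteAbove_eq_sum_card_bipartiteBelow fun i t => g i ≤ t ∧ t < h i

lemma sum_conjMultiset_map : (conjMultiset (s.val.map h)).sum = ∑ i ∈ s, h i := by
  have := sum_tsub_eq_sum_card_filter s h 0
  simp only [Pi.zero_apply, tsub_zero, zero_le, true_and] at this
  rw [this, conjMultiset_map]
  rfl

end Conjugate

section Unimodal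

open Finset

/-- A sequence of natural numbers is unimodal when it never rises again after a descent; this is
stated without reference to a peak, by asking that the superlevel sets be order-connected. -/
def IsUnimodal (h : ℕ → ℕ) : Prop :=
  ∀ ⦃i k l⦄, i ≤ k → k ≤ l → min (h i) (h l) ≤ h k

lemma card_filter_add_notMem_of_ordConnected {S : Finset ℕ} (hS : (S : Set ℕ).OrdConnected)
    (m : ℕ) : #{i ∈ S | i + m ∉ S} = min #S m := by
  rcases S.eq_empty_or_nonempty with rfl | hne
  · simp
  obtain ⟨u, v, rfl⟩ : ∃ u v, S = Icc u v :=
    ⟨S.min' hne, S.max' hne, Subset.antisymm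
      (fun x hx => mem_Icc.2 ⟨S.min'_le x hx, S.le_max' x hx⟩)
      fun x hx => hS.out (S.min'_mem hne) (S.max'_mem hne) (mem_Icc.1 hx)⟩
  have hleave : {i ∈ Icc u v | i + m ∉ Icc u v} = Icc (max u (v + 1 - m)) v := by
    ext x
    simp only [mem_filter, mem_Icc]
    omega
  rw [hleave, Nat.card_Icc, Nat.card_Icc]
  omega

variable {h : ℕ → ℕ} {N : ℕ}

lemma IsUnimodal.sum_tsub_eq_sum_min_conjMultiset (hh : IsUnimodal h)
    (hN : ∀ i, N ≤ i → h i = 0) (m : ℕ) :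
    ∑ i ∈ range N, (h i - h (i + m)) =
      ((conjMultiset ((range N).val.map h)).map fun t => min t m).sum := by
  rw [sum_tsub_eq_sum_card_filter, conjMultiset_map, Multiset.map_map]
  refine sum_congr rfl fun t _ => ?_
  have mem_superlevel : ∀ i, i ∈ ({i ∈ range N | t < h i} : Finset ℕ) ↔ t < h i := by
    intro i
    have := hN i
    simp only [mem_filter, mem_range]
    omega
  have hconn : (({i ∈ range N | t < h i} : Finset ℕ) : Set ℕ).OrdConnected := by
    refine ⟨fun a ha b hb k hk => ?_⟩
    rw [mem_coe, mem_superlevel] at *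
    exact (lt_min ha hb).trans_le (hh hk.1 hk.2)
  rw [Function.comp_apply, ← card_filter_add_notMem_of_ordConnected hconn, filter_filter]
  simp only [mem_superlevel, not_lt, and_comm]

variable (h) in
lemma le_add_sum_descents {a b : ℕ} (hab : a ≤ b) :
    h a ≤ h b + ∑ i ∈ Ico a b, (h i - h (i + 1)) := by
  induction b, hab using Nat.le_induction with
  | base => simp
  | succ b hab ih =>
    rw [sum_Ico_succ_top hab]
    omega

/- The descents of a sequence add up to at least its maximum; a rise after a descent makes them
exceed it. -/
lemma isUnimodal_of_sum_descents_le (hN : ∀ i, N ≤ i → h i = 0)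
    (hdesc : ∑ i ∈ range N, (h i - h (i + 1)) ≤ (range N).sup h) : IsUnimodal h := by
  have tail : ∀ k b, k ≤ b → h b ≤ ∑ i ∈ Ico k N, (h i - h (i + 1)) := by
    intro k b hkb
    rcases le_total N b with hb | hb
    · simp [hN b hb]
    · calc h b ≤ ∑ i ∈ Ico b N, (h i - h (i + 1)) := by
            simpa [hN N le_rfl] using le_add_sum_descents h hb
        _ ≤ ∑ i ∈ Ico k N, (h i - h (i + 1)) :=
            sum_le_sum_of_subset (Ico_subset_Ico_left hkb)
  have valley : ∀ a k b, a ≤ k → k < N → k ≤ b → h a + h b ≤ h k + (range N).sup h := by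
    intro a k b hak hkN hkb
    have hsplit := sum_Ico_consecutive (fun i => h i - h (i + 1)) hak hkN.le
    have hsub : ∑ i ∈ Ico a N, (h i - h (i + 1)) ≤ ∑ i ∈ range N, (h i - h (i + 1)) :=
      sum_le_sum_of_subset (range_eq_Ico N ▸ Ico_subset_Ico_left a.zero_le)
    have := le_add_sum_descents h hak
    have := tail k b hkb
    omega
  intro i k l hik hkl
  rcases le_or_gt N k with hNk | hkN
  · simp [hN l (hNk.trans hkl)]
  obtain ⟨p, -, hp⟩ := exists_mem_eq_sup (range N) ⟨k, mem_range.2 hkN⟩ h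
  rw [hp] at valley
  rcases le_total p k with hpk | hkp
  · have := valley p k l hpk hkN hkl
    omega
  · have := valley i k p hik hkN hkp
    omega

/- Applied to `h i = dim V_i` and `ν i m = dim ker (f ^ m : V_i → V_(i+m))`, where `hfactor` holds
because `f ^ m` factors through `V_k`. -/
lemma forall_le_tsub_iff_sum_eq (hN : ∀ i, N ≤ i → h i = 0) {ν : ℕ → ℕ → ℕ}
    (hle : ∀ i m, ν i m ≤ h i)
    (hfactor : ∀ {i k m}, i ≤ k → k ≤ i + m → h i ≤ ν i m + h k) :
    (∀ i m, ν i m ≤ h i - h (i + m)) ↔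
      ∀ m, ∑ i ∈ range N, ν i m =
        ((conjMultiset ((range N).val.map h)).map fun t => min t m).sum := by
  have hge : ∀ i m, h i - h (i + m) ≤ ν i m := fun i m =>
    tsub_le_iff_right.2 (hfactor (i.le_add_right m) le_rfl)
  constructor
  · intro hmax m
    have hh : IsUnimodal h := fun i k l hik hkl => by
      have hdrop := hmax i (l - i)
      rw [Nat.add_sub_of_le (hik.trans hkl)] at hdrop
      have := hfactor (m := l - i) hik (by omega)
      omega
    rw [← hh.sum_tsub_eq_sum_min_conjMultiset hN]
    exact sum_congr rfl fun i _ => (hmax i m).antisymm (hge i m)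
  · intro hsum i m
    have hh : IsUnimodal h := isUnimodal_of_sum_descents_le hN <|
      calc ∑ i ∈ range N, (h i - h (i + 1)) ≤ ∑ i ∈ range N, ν i 1 :=
            sum_le_sum fun i _ => hge i 1
        _ = (range N).sup h := by rw [hsum, sum_min_one_conjMultiset]; rfl
    rcases le_or_gt N i with hi | hi
    · exact (hle i m).trans (by simp [hN i hi])
    · have heq := (hh.sum_tsub_eq_sum_min_conjMultiset hN m).trans (hsum m).symm
      exact ((sum_eq_sum_iff_of_le fun i _ => hge i m).1 heq i (mem_range.2 hi)).ge

end Unimodal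

section RankNullity

variable {V W : Type*} [AddCommGroup V] [Module K V] [AddCommGroup W] [Module K W]

lemma finrank_map_add_finrank_ker_inf (g : V →ₗ[K] W) (U : Submodule K V)
    [FiniteDimensional K U] :
    Module.finrank K (U.map g) + Module.finrank K ↥(LinearMap.ker g ⊓ U) =
      Module.finrank K U := by
  have h := (g.domRestrict U).finrank_range_add_finrank_ker
  rwa [LinearMap.range_domRestrict, LinearMap.ker_domRestrict,
    ← Submodule.finrank_map_subtype_eq, Submodule.map_comap_subtype, inf_comm] at h

lemma disjoint_ker_iff_le_map_of_finrank_eq {g : V →ₗ[K] W} {U : Submodule K V}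
    {U' : Submodule K W} [FiniteDimensional K U] [FiniteDimensional K U'] (hg : U.map g ≤ U')
    (hrank : Module.finrank K U = Module.finrank K U') :
    Disjoint (LinearMap.ker g) U ↔ U' ≤ U.map g := by
  have hfin : FiniteDimensional K ↥(LinearMap.ker g ⊓ U) :=
    Submodule.finiteDimensional_of_le inf_le_right
  have hrn := finrank_map_add_finrank_ker_inf g U
  rw [disjoint_iff, ← Submodule.finrank_eq_zero (R := K)]
  constructor
  · intro hker
    exact (Submodule.eq_of_le_of_finrank_le hg (by omega)).ge
  · intro hsurj
    have := Submodule.finrank_mono hsurj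
    omega

variable {ι : Type*}

lemma finrank_finset_sup_of_supIndep [FiniteDimensional K V] {s : Finset ι}
    {U : ι → Submodule K V} (h : s.SupIndep U) :
    Module.finrank K ↥(s.sup U) = ∑ i ∈ s, Module.finrank K (U i) := by
  induction s using Finset.induction with
  | empty => simp
  | insert i s hi ih =>
    have hdisj : U i ⊓ s.sup U = ⊥ :=
      (h (Finset.subset_insert i s) (Finset.mem_insert_self i s) hi).eq_bot
    have hdim := Submodule.finrank_sup_add_finrank_inf_eq (U i) (s.sup U)
    rw [hdisj, finrank_bot, add_zero] at hdim
    rw [Finset.sup_insert, Finset.sum_insert hi, hdim, ih (h.subset (Finset.subset_insert i s))]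

lemma finrank_ker_eq_sum_finrank_ker_inf [FiniteDimensional K V] [FiniteDimensional K W]
    {s : Finset ι} {U : ι → Submodule K V} {U' : ι → Submodule K W} {g : V →ₗ[K] W}
    (hU : iSupIndep U) (htop : s.sup U = ⊤) (hU' : iSupIndep U') (hg : ∀ i, (U i).map g ≤ U' i) :
    Module.finrank K (LinearMap.ker g) =
      ∑ i ∈ s, Module.finrank K ↥(LinearMap.ker g ⊓ U i) := by
  have hdim : Module.finrank K V = ∑ i ∈ s, Module.finrank K (U i) := by
    rw [← finrank_finset_sup_of_supIndep (hU.supIndep' s), htop, finrank_top]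
  have hsup : (s.sup fun i => (U i).map g) = LinearMap.range g := by
    rw [LinearMap.range_eq_map, ← htop, Finset.sup_eq_iSup, Finset.sup_eq_iSup]
    simp only [Submodule.map_iSup]
  have hrange : Module.finrank K (LinearMap.range g) =
      ∑ i ∈ s, Module.finrank K ((U i).map g) := by
    rw [← hsup, finrank_finset_sup_of_supIndep ((hU'.mono hg).supIndep' s)]
  have hrn := g.finrank_range_add_finrank_ker
  rw [hdim, ← Finset.sum_congr rfl fun i _ => finrank_map_add_finrank_ker_inf g (U i),
    Finset.sum_add_distrib, hrange] at hrn
  exact Nat.add_left_cancel hrn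

end RankNullity

section GradedSpace

variable {V : Type*} [AddCommGroup V] [Module K V]

/-- The strong Lefschetz property in the wide sense of a degree-one endomorphism `f` of a graded
space `V`: every power `f ^ m : V_i → V_(i+m)` has maximal rank, that is, it is injective or
surjective. -/
def HasMaxRankPowers (𝒱 : ℕ → Submodule K V) (f : Module.End K V) : Prop :=
  ∀ i m, Disjoint (LinearMap.ker (f ^ m)) (𝒱 i) ∨ 𝒱 (i + m) ≤ (𝒱 i).map (f ^ m)

/-- The strong Lefschetz property in the narrow sense of a degree-one endomorphism `f` of a space
graded in degrees `0, …, j`: for `2 * i ≤ j`, the map `f ^ (j - 2 * i) : V_i → V_(j-i)` is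
injective and surjective. -/
def HasMiddleBijections (𝒱 : ℕ → Submodule K V) (f : Module.End K V) (j : ℕ) : Prop :=
  ∀ i, 2 * i ≤ j → Disjoint (LinearMap.ker (f ^ (j - 2 * i))) (𝒱 i) ∧
    𝒱 (j - i) ≤ (𝒱 i).map (f ^ (j - 2 * i))

variable {𝒱 : ℕ → Submodule K V} {f : Module.End K V} (hf : ∀ i, (𝒱 i).map f ≤ 𝒱 (i + 1))

include hf

lemma map_pow_le_of_map_le_succ (i m : ℕ) : (𝒱 i).map (f ^ m) ≤ 𝒱 (i + m) := by
  induction m with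
  | zero => exact (Submodule.map_id _).le
  | succ m ih =>
    rw [pow_succ', Module.End.mul_eq_comp, Submodule.map_comp]
    exact (Submodule.map_mono ih).trans (hf _)

lemma HasMiddleBijections.hasMaxRankPowers {j : ℕ} (h : HasMiddleBijections 𝒱 f j)
    (hj : ∀ k, j < k → 𝒱 k = ⊥) : HasMaxRankPowers 𝒱 f := by
  intro i m
  rcases lt_or_ge j (i + m) with hjm | hjm
  · exact Or.inr (by simp [hj _ hjm])
  rcases le_total (2 * i + m) j with him | him
  · have hker : LinearMap.ker (f ^ m) ≤ LinearMap.ker (f ^ (j - 2 * i)) := by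
      rw [← Nat.sub_add_cancel (show m ≤ j - 2 * i by omega), pow_add]
      exact LinearMap.ker_le_ker_comp _ _
    exact Or.inl ((h i (by omega)).1.mono_left hker)
  · obtain ⟨k, hk⟩ : ∃ k, k + (i + m) = j := ⟨_, Nat.sub_add_cancel hjm⟩
    obtain ⟨d, rfl⟩ : ∃ d, i = k + d := ⟨i - k, by omega⟩
    have hsurj := (h k (by omega)).2
    rw [show j - k = k + d + m by omega, show j - 2 * k = m + d by omega, pow_add,
      Module.End.mul_eq_comp, Submodule.map_comp] at hsurj
    exact Or.inr (hsurj.trans (Submodule.map_mono (map_pow_le_of_map_le_succ hf k d)))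

variable [FiniteDimensional K V]

lemma HasMaxRankPowers.hasMiddleBijections {j : ℕ} (h : HasMaxRankPowers 𝒱 f)
    (hsymm : ∀ i ≤ j, Module.finrank K (𝒱 i) = Module.finrank K (𝒱 (j - i))) :
    HasMiddleBijections 𝒱 f j := by
  intro i hi
  have hij : i + (j - 2 * i) = j - i := by omega
  have hmax := h i (j - 2 * i)
  have hmap := map_pow_le_of_map_le_succ hf i (j - 2 * i)
  rw [hij] at hmax hmap
  have hiff := disjoint_ker_iff_le_map_of_finrank_eq hmap (hsymm i (by omega))
  tauto

lemma hasMaxRankPowers_iff_finrank_ker_inf_le :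
    HasMaxRankPowers 𝒱 f ↔ ∀ i m, Module.finrank K ↥(LinearMap.ker (f ^ m) ⊓ 𝒱 i) ≤
      Module.finrank K (𝒱 i) - Module.finrank K (𝒱 (i + m)) := by
  refine forall₂_congr fun i m => ?_
  have hrn := finrank_map_add_finrank_ker_inf (f ^ m) (𝒱 i)
  constructor
  · rintro (hinj | hsurj)
    · rw [hinj.eq_bot, finrank_bot]
      exact Nat.zero_le _
    · have := Submodule.finrank_mono hsurj
      omega
  · intro hle
    rcases le_total (Module.finrank K (𝒱 i)) (Module.finrank K (𝒱 (i + m))) with hi | hi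
    · refine Or.inl (disjoint_iff.2 (Submodule.finrank_eq_zero.1 ?_))
      omega
    · exact Or.inr (Submodule.eq_of_le_of_finrank_le (map_pow_le_of_map_le_succ hf i m)
        (by omega)).ge

lemma finrank_le_finrank_ker_inf_add_finrank {i k m : ℕ} (hik : i ≤ k) (hkm : k ≤ i + m) :
    Module.finrank K (𝒱 i) ≤
      Module.finrank K ↥(LinearMap.ker (f ^ m) ⊓ 𝒱 i) + Module.finrank K (𝒱 k) := by
  obtain ⟨d, rfl⟩ := Nat.exists_eq_add_of_le hik
  obtain ⟨e, rfl⟩ := Nat.exists_eq_add_of_le' (Nat.le_of_add_le_add_left hkm)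
  have hker : LinearMap.ker (f ^ d) ≤ LinearMap.ker (f ^ (e + d)) := by
    rw [pow_add]
    exact LinearMap.ker_le_ker_comp _ _
  have := finrank_map_add_finrank_ker_inf (f ^ d) (𝒱 i)
  have := Submodule.finrank_mono (map_pow_le_of_map_le_succ hf i d)
  have := Submodule.finrank_mono (inf_le_inf_right (𝒱 i) hker)
  omega

theorem hasMaxRankPowers_iff_finrank_ker_pow {N : ℕ} (hind : iSupIndep 𝒱)
    (htop : (Finset.range N).sup 𝒱 = ⊤) :
    HasMaxRankPowers 𝒱 f ↔ ∀ m, Module.finrank K (LinearMap.ker (f ^ m)) =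
      ((conjMultiset ((Finset.range N).val.map fun i => Module.finrank K (𝒱 i))).map
        fun t => min t m).sum := by
  have hN : ∀ i, N ≤ i → Module.finrank K (𝒱 i) = 0 := fun i hi => by
    have hdisj : Disjoint (𝒱 i) ((Finset.range N).sup 𝒱) :=
      hind.supIndep' (insert i (Finset.range N)) (Finset.subset_insert _ _)
        (Finset.mem_insert_self _ _) (by simpa using hi)
    rw [htop, disjoint_top] at hdisj
    rw [hdisj, finrank_bot]
  have hker : ∀ m, Module.finrank K (LinearMap.ker (f ^ m)) =
      ∑ i ∈ Finset.range N, Module.finrank K ↥(LinearMap.ker (f ^ m) ⊓ 𝒱 i) := fun m =>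
    finrank_ker_eq_sum_finrank_ker_inf hind htop (hind.comp (add_left_injective m))
      fun i => map_pow_le_of_map_le_succ hf i m
  simp only [hasMaxRankPowers_iff_finrank_ker_inf_le hf, hker]
  exact forall_le_tsub_iff_sum_eq hN (fun i m => Submodule.finrank_mono inf_le_right)
    (finrank_le_finrank_ker_inf_add_finrank hf)

end GradedSpace

section GradedQuotient

variable {I : Ideal (MvPolynomial (Fin n) K)}

lemma mem_gradedPiece {i : ℕ} {a : MvPolynomial (Fin n) K ⧸ I} :
    a ∈ gradedPiece I i ↔ ∃ p, p.IsHomogeneous i ∧ Ideal.Quotient.mk I p = a :=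
  Iff.rfl

instance gradedPiece_gradedMonoid : SetLike.GradedMonoid (gradedPiece I) where
  one_mem := mem_gradedPiece.2 ⟨1, isHomogeneous_one _ _, map_one _⟩
  mul_mem := by
    rintro i k _ _ ⟨p, hp, rfl⟩ ⟨q, hq, rfl⟩
    exact mem_gradedPiece.2 ⟨p * q, hp.mul hq, map_mul _ _ _⟩

lemma mk_X_mem_gradedPiece (v : Fin n) : Ideal.Quotient.mk I (X v) ∈ gradedPiece I 1 :=
  mem_gradedPiece.2 ⟨X v, isHomogeneous_X K v, rfl⟩

lemma map_mulLeft_gradedPiece_le {d : ℕ} {a : MvPolynomial (Fin n) K ⧸ I}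
    (ha : a ∈ gradedPiece I d) (i : ℕ) :
    (gradedPiece I i).map (LinearMap.mulLeft K a) ≤ gradedPiece I (i + d) := by
  rintro _ ⟨b, hb, rfl⟩
  exact add_comm d i ▸ SetLike.mul_mem_graded ha hb

lemma iSup_gradedPiece : ⨆ i, gradedPiece I i = ⊤ := by
  have hpoly : ⨆ i, homogeneousSubmodule (Fin n) K i = ⊤ :=
    let _ : DirectSum.Decomposition (homogeneousSubmodule (Fin n) K) := decomposition
    (DirectSum.Decomposition.isInternal _).submodule_iSup_eq_top
  simp only [gradedPiece, ← Submodule.map_iSup, hpoly, Submodule.map_top, LinearMap.range_eq_top]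
  exact Ideal.Quotient.mkₐ_surjective K I

lemma iSupIndep_gradedPiece (hI : IsHomogIdeal I) : iSupIndep (gradedPiece I) := by
  refine iSupIndep_def.2 fun i => Submodule.disjoint_def.2 ?_
  simp only [gradedPiece, ← Submodule.map_iSup]
  rintro _ ⟨p, hp, rfl⟩ ⟨q, hq, hqp⟩
  have hq0 : homogeneousComponent i q = 0 := by
    refine (iSup₂_le fun k hk r hr => ?_ : _ ≤ LinearMap.ker (homogeneousComponent i)) hq
    rw [LinearMap.mem_ker, homogeneousComponent_of_mem hr, if_neg hk.symm]
  have hcomp := hI _ (Ideal.Quotient.eq.1 hqp) i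
  rw [map_sub, hq0, homogeneousComponent_eq_self hp, zero_sub, neg_mem_iff] at hcomp
  exact Ideal.Quotient.eq_zero_iff_mem.2 hcomp

variable [FiniteDimensional K (MvPolynomial (Fin n) K ⧸ I)]

lemma bddAbove_setOf_hilbFn_ne_zero (hI : IsHomogIdeal I) : BddAbove {i | hilbFn I i ≠ 0} := by
  refine ((WellFoundedGT.finite_ne_bot_of_iSupIndep (iSupIndep_gradedPiece hI)).subset ?_).bddAbove
  exact fun i hi hbot => hi (Submodule.finrank_eq_zero.2 hbot)

lemma gradedPiece_eq_bot_of_socDeg_lt (hI : IsHomogIdeal I) {k : ℕ} (hk : socDeg I < k) :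
    gradedPiece I k = ⊥ := by
  refine Submodule.finrank_eq_zero.1 (by_contra fun h => hk.not_ge ?_)
  exact le_csSup (bddAbove_setOf_hilbFn_ne_zero hI) h

lemma sup_range_gradedPiece (hI : IsHomogIdeal I) :
    (Finset.range (socDeg I + 1)).sup (gradedPiece I) = ⊤ := by
  refine top_le_iff.1 (iSup_gradedPiece.ge.trans (iSup_le fun i => ?_))
  rcases le_or_gt i (socDeg I) with hi | hi
  · exact Finset.le_sup (Finset.mem_range_succ_iff.2 hi)
  · simp [gradedPiece_eq_bot_of_socDeg_lt hI hi]

lemma finrank_quotient_eq_sum_hilbFn (hI : IsHomogIdeal I) :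
    Module.finrank K (MvPolynomial (Fin n) K ⧸ I) =
      ∑ i ∈ Finset.range (socDeg I + 1), hilbFn I i := by
  rw [← finrank_top, ← sup_range_gradedPiece hI,
    finrank_finset_sup_of_supIndep ((iSupIndep_gradedPiece hI).supIndep' _)]
  rfl

end GradedQuotient

section Lefschetz

variable {I : Ideal (MvPolynomial (Fin n) K)} {ℓ : MvPolynomial (Fin n) K ⧸ I}

lemma powMulBij_iff {d u v : ℕ} :
    PowMulBij I ℓ d u v ↔
      Disjoint (LinearMap.ker (LinearMap.mulLeft K ℓ ^ d)) (gradedPiece I u) ∧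
        gradedPiece I v ≤ (gradedPiece I u).map (LinearMap.mulLeft K ℓ ^ d) := by
  rw [LinearMap.pow_mulLeft, disjoint_comm, Submodule.disjoint_def]
  rfl

lemma slPair_iff_hasMiddleBijections :
    SLPair I ℓ ↔ HasMiddleBijections (gradedPiece I) (LinearMap.mulLeft K ℓ) (socDeg I) :=
  forall₂_congr fun _ _ => powMulBij_iff

lemma slPair_iff_hasMaxRankPowers [FiniteDimensional K (MvPolynomial (Fin n) K ⧸ I)]
    (hI : IsHomogIdeal I) (hℓ : ℓ ∈ gradedPiece I 1)
    (hsymm : ∀ i ≤ socDeg I, hilbFn I i = hilbFn I (socDeg I - i)) :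
    SLPair I ℓ ↔ HasMaxRankPowers (gradedPiece I) (LinearMap.mulLeft K ℓ) := by
  have hdeg := map_mulLeft_gradedPiece_le hℓ
  rw [slPair_iff_hasMiddleBijections]
  exact ⟨fun h => h.hasMaxRankPowers hdeg fun _ => gradedPiece_eq_bot_of_socDeg_lt hI,
    fun h => h.hasMiddleBijections hdeg hsymm⟩

lemma isJordanTypeOf_conjMultiset_iff [FiniteDimensional K (MvPolynomial (Fin n) K ⧸ I)]
    (hI : IsHomogIdeal I) :
    IsJordanTypeOf I ℓ (conjMultiset (hilbMultiset I)) ↔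
      ∀ m, Module.finrank K (LinearMap.ker (LinearMap.mulLeft K ℓ ^ m)) =
        ((conjMultiset (hilbMultiset I)).map fun t => min t m).sum := by
  have hsum : (conjMultiset (hilbMultiset I)).sum =
      Module.finrank K (MvPolynomial (Fin n) K ⧸ I) :=
    (sum_conjMultiset_map (Finset.range (socDeg I + 1)) (hilbFn I)).trans
      (finrank_quotient_eq_sum_hilbFn hI).symm
  rw [IsJordanTypeOf, and_iff_right (zero_notMem_conjMultiset _), and_iff_right hsum]

end Lefschetz

section Gorenstein

variable {I : Ideal (MvPolynomial (Fin n) K)}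

lemma mem_socleSub {a : MvPolynomial (Fin n) K ⧸ I} :
    a ∈ socleSub I ↔ ∀ v, Ideal.Quotient.mk I (X v) * a = 0 := by
  simp [socleSub]

lemma hilbFn_socDeg_ne_zero [FiniteDimensional K (MvPolynomial (Fin n) K ⧸ I)]
    (hI : IsHomogIdeal I) (hne : I ≠ ⊤) : hilbFn I (socDeg I) ≠ 0 := by
  refine Nat.sSup_mem (s := {i | hilbFn I i ≠ 0}) ⟨0, fun h => hne ?_⟩
    (bddAbove_setOf_hilbFn_ne_zero hI)
  have h1 : (1 : MvPolynomial (Fin n) K ⧸ I) ∈ gradedPiece I 0 := SetLike.one_mem_graded _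
  rw [Submodule.finrank_eq_zero.1 h, Submodule.mem_bot] at h1
  exact (Ideal.eq_top_iff_one I).2 (Ideal.Quotient.eq_zero_iff_mem.1 h1)

lemma gradedPiece_socDeg_eq_socleSub (hAG : IsAG I) :
    gradedPiece I (socDeg I) = socleSub I := by
  obtain ⟨hI, hne, hfin, hsoc⟩ := hAG
  refine Submodule.eq_of_le_of_finrank_le (fun a ha => mem_socleSub.2 fun v => ?_) ?_
  · have hXa := SetLike.mul_mem_graded (mk_X_mem_gradedPiece v) ha
    rwa [gradedPiece_eq_bot_of_socDeg_lt hI (by omega), Submodule.mem_bot] at hXa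
  · exact hsoc.trans_le (Nat.one_le_iff_ne_zero.2 (hilbFn_socDeg_ne_zero hI hne))

lemma exists_mul_ne_zero_of_add_eq_socDeg (hAG : IsAG I) {i d : ℕ} (hid : i + d = socDeg I)
    {a : MvPolynomial (Fin n) K ⧸ I} (ha : a ∈ gradedPiece I i) (ha0 : a ≠ 0) :
    ∃ b ∈ gradedPiece I d, a * b ≠ 0 := by
  induction d generalizing i a with
  | zero => exact ⟨1, SetLike.one_mem_graded _, by rwa [mul_one]⟩
  | succ d ih =>
    have hdisj : Disjoint (gradedPiece I i) (socleSub I) := by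
      rw [← gradedPiece_socDeg_eq_socleSub hAG]
      exact (iSupIndep_gradedPiece hAG.1).pairwiseDisjoint (by omega)
    have hsoc : a ∉ socleSub I := fun hs => ha0 (Submodule.disjoint_def.1 hdisj a ha hs)
    obtain ⟨v, hv⟩ := not_forall.1 (mt mem_socleSub.2 hsoc)
    obtain ⟨b, hb, hab⟩ :=
      ih (by omega) (SetLike.mul_mem_graded (mk_X_mem_gradedPiece v) ha) hv
    refine ⟨b * Ideal.Quotient.mk I (X v), SetLike.mul_mem_graded hb (mk_X_mem_gradedPiece v), ?_⟩
    rwa [← mul_assoc, ← mul_rotate]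

/- The pairing `A_i × A_k → A_(i+k)` into the one-dimensional socle embeds `A_i` into the dual of
`A_k`. -/
lemma hilbFn_le_of_add_eq_socDeg (hAG : IsAG I) {i k : ℕ} (hik : i + k = socDeg I) :
    hilbFn I i ≤ hilbFn I k := by
  have hfin := hAG.2.2.1
  let pairing : gradedPiece I i →ₗ[K] gradedPiece I k →ₗ[K] gradedPiece I (i + k) :=
    LinearMap.mk₂ K (fun a b => ⟨a * b, SetLike.mul_mem_graded a.2 b.2⟩)
      (fun _ _ _ => Subtype.ext (add_mul _ _ _)) (fun _ _ _ => Subtype.ext (smul_mul_assoc _ _ _))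
      (fun _ _ _ => Subtype.ext (mul_add _ _ _)) (fun _ _ _ => Subtype.ext (mul_smul_comm _ _ _))
  have hinj : Function.Injective pairing := by
    refine (injective_iff_map_eq_zero pairing).2 fun a ha => by_contra fun ha0 => ?_
    obtain ⟨b, hb, hab⟩ := exists_mul_ne_zero_of_add_eq_socDeg hAG hik a.2 (by simpa using ha0)
    exact hab (congrArg Subtype.val (LinearMap.congr_fun ha ⟨b, hb⟩))
  have hone : Module.finrank K (gradedPiece I (i + k)) = 1 := by
    rw [hik, gradedPiece_socDeg_eq_socleSub hAG, hAG.2.2.2]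
  have hle := LinearMap.finrank_le_finrank_of_injective hinj
  rwa [Module.finrank_linearMap, hone, mul_one] at hle

lemma hilbFn_symm (hAG : IsAG I) {i : ℕ} (hi : i ≤ socDeg I) :
    hilbFn I i = hilbFn I (socDeg I - i) :=
  (hilbFn_le_of_add_eq_socDeg hAG (by omega)).antisymm (hilbFn_le_of_add_eq_socDeg hAG (by omega))

end Gorenstein

theorem stmt0_general (I : Ideal (MvPolynomial (Fin n) K)) (hI : IsHomogIdeal I)
    [FiniteDimensional K (MvPolynomial (Fin n) K ⧸ I)]
    (hsymm : ∀ i ≤ socDeg I, hilbFn I i = hilbFn I (socDeg I - i))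
    (ℓ : MvPolynomial (Fin n) K ⧸ I) (hℓ : ℓ ∈ gradedPiece I 1) :
    SLPair I ℓ ↔ IsJordanTypeOf I ℓ (conjMultiset (hilbMultiset I)) := by
  rw [slPair_iff_hasMaxRankPowers hI hℓ hsymm, isJordanTypeOf_conjMultiset_iff hI]
  exact hasMaxRankPowers_iff_finrank_ker_pow (map_mulLeft_gradedPiece_le hℓ)
    (iSupIndep_gradedPiece hI) (sup_range_gradedPiece hI)

/-- for a standard graded Artinian Gorenstein algebra `A = R/I` and a
linear form `ℓ`, the pair `(A, ℓ)` is strong Lefschetz if and only if the Jordan type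
of multiplication by `ℓ` on `A` is the conjugate of the Hilbert function of `A`. -/
theorem stmt0 (I : Ideal (MvPolynomial (Fin n) K)) (hAG : IsAG I)
    (ℓ : MvPolynomial (Fin n) K ⧸ I) (hℓ : ℓ ∈ gradedPiece I 1) :
    SLPair I ℓ ↔ IsJordanTypeOf I ℓ (conjMultiset (hilbMultiset I)) :=
  haveI := hAG.2.2.1
  stmt0_general I hAG.1 (fun _ => hilbFn_symm hAG) ℓ hℓ
end
end

section
/- A symmetric sequence T = (1, t_1, …, t_{j-1}, 1) with t_1 = 3 is the Hilbert function of some codimension three standard-graded Artinian Gorenstein algebra if and only if its first half difference sequence ΔT = (1, t_1 − 1, t_2 − t_1, …, t_{⌊j/2⌋} − t_{⌊j/2⌋−1}) is an O-sequence, i.e., T is an SI-sequence. -/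
/- Common background: standard graded Artinian (Gorenstein) quotients of a
polynomial ring, their graded pieces, Hilbert function, socle degree,
Lefschetz-type conditions, and Macaulay contraction duality. -/

noncomputable section
open MvPolynomial
open scoped Classical

variable {K : Type*} [Field K] {n : ℕ}

/-- An integer-valued sequence is an O-sequence (over `K`) if it is the Hilbert
function of some standard graded Artinian algebra (quotient of some polynomial ring
by a homogeneous ideal). -/
def IsOSequence (K : Type*) [Field K] (h : ℕ → ℤ) : Prop :=
  ∃ (m : ℕ) (I : Ideal (MvPolynomial (Fin m) K)), IsHomogIdeal I ∧
    FiniteDimensional K (MvPolynomial (Fin m) K ⧸ I) ∧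
    ∀ i, (hilbFn I i : ℤ) = h i

/-!
By Macaulay duality an Artinian Gorenstein algebra of socle degree `j` is the quotient by the
annihilator of a homogeneous functional of degree `j`.

Necessity: for a linear form `ℓ`, let `h` and `d` be the Hilbert functions of `R / I` and of its
quotient by `ℓ`. Since `I : ℓ` is again the annihilator of a functional, its Hilbert function is
symmetric, which gives `h (i + 1) + d (j - i) = h i + d (i + 1)`. The first half difference of `h`
at `i` is therefore `d i - d (j + 1 - i)`. As `d` lives in two variables, it is nonincreasing from
the initial degree of `I` on once `ℓ` does not divide a form of least degree in `I`. Such an `ℓ`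
exists over an infinite field, and extending scalars does not change Hilbert functions.

Sufficiency: linkage by complete intersections of plane curves produces a functional on `K[X][Y]`
whose quotient, truncated in degrees at most `i`, has dimension `δ 0 + ⋯ + δ i`. One linkage step
across the line `Y = 0` replaces `δ` by `i ↦ δ (i + 1) - 1`. Homogenizing the functional to degree
`j` realizes the first half of `T`, and symmetry gives the rest.
-/

/-! ### Linear algebra -/

theorem finrank_range_eq_of_ker_eq {V W₁ W₂ : Type*} [AddCommGroup V] [Module K V]
    [AddCommGroup W₁] [Module K W₁] [AddCommGroup W₂] [Module K W₂]
    {f : V →ₗ[K] W₁} {g : V →ₗ[K] W₂} (h : LinearMap.ker f = LinearMap.ker g) :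
    Module.finrank K (LinearMap.range f) = Module.finrank K (LinearMap.range g) := by
  rw [← f.quotKerEquivRange.finrank_eq, ← g.quotKerEquivRange.finrank_eq, h]

theorem finrank_map_add_finrank_inf_ker {V W : Type*} [AddCommGroup V] [Module K V]
    [AddCommGroup W] [Module K W] (f : V →ₗ[K] W) (M : Submodule K V) [FiniteDimensional K M] :
    Module.finrank K (M.map f) + Module.finrank K (M ⊓ LinearMap.ker f : Submodule K V) =
      Module.finrank K M := by
  have h := LinearMap.finrank_range_add_finrank_ker (f.domRestrict M)
  rwa [LinearMap.range_domRestrict, LinearMap.ker_domRestrict,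
    ← Submodule.finrank_map_subtype_eq, Submodule.map_comap_subtype] at h

theorem exists_fun_fin_span_eq {V : Type*} [AddCommGroup V] [Module K V] {M : Submodule K V}
    [FiniteDimensional K M] {m : ℕ} (h : Module.finrank K M ≤ m) :
    ∃ u : Fin m → V, Submodule.span K (Set.range u) = M := by
  let b := Module.finBasis K M
  refine ⟨Function.extend (Fin.castLE h) (M.subtype ∘ b) 0, ?_⟩
  rw [Set.range_extend (Fin.castLE_injective h), Submodule.span_union, Set.range_comp,
    ← Submodule.map_span, b.span_eq, Submodule.map_subtype_top]
  exact sup_eq_left.mpr (Submodule.span_le.mpr (by rintro _ ⟨i, -, rfl⟩; exact zero_mem _))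

theorem rank_map_algebraMap {L m ι : Type*} [Field L] [Algebra K L] [Finite m] [Fintype ι]
    (A : Matrix m ι K) : (A.map (algebraMap K L)).rank = A.rank := by
  obtain ⟨κ, a, ha, hspan, hli⟩ := exists_linearIndependent' K A.col
  have : Fintype κ := have := Finite.of_injective a ha; Fintype.ofFinite κ
  let f : (m → K) →ₗ[K] (m → L) := (Algebra.linearMap K L).compLeft m
  have hcol : (A.map (algebraMap K L)).col = f ∘ A.col := rfl
  have hli' : LinearIndependent L (f ∘ A.col ∘ a) := linearIndependent_algebraMap_comp_iff.mpr hli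
  have hspan' : Submodule.span L (Set.range (f ∘ A.col)) =
      Submodule.span L (Set.range (f ∘ A.col ∘ a)) := by
    refine le_antisymm (Submodule.span_le.mpr ?_)
      (Submodule.span_mono (Set.range_comp_subset_range a (f ∘ A.col)))
    rintro _ ⟨i, rfl⟩
    have hi : A.col i ∈ Submodule.span K (Set.range (A.col ∘ a)) :=
      hspan ▸ Submodule.subset_span ⟨i, rfl⟩
    have hfi := Submodule.mem_map_of_mem (f := f) hi
    rw [Submodule.map_span, ← Set.range_comp] at hfi
    exact Submodule.span_le_restrictScalars K L _ hfi
  rw [Matrix.rank_eq_finrank_span_cols, Matrix.rank_eq_finrank_span_cols, hcol, hspan', ← hspan,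
    finrank_span_eq_card hli', finrank_span_eq_card hli]

/-! ### Hilbert functions -/

section HilbertFunction

variable {I J : Ideal (MvPolynomial (Fin n) K)} {ℓ : MvPolynomial (Fin n) K} {e i : ℕ}

instance finite_homogeneousSubmodule (i : ℕ) : Module.Finite K (homogeneousSubmodule (Fin n) K i) :=
  Module.Finite.iff_fg.mpr (homogeneousSubmodule_fg (Fin n) K i)

instance finite_gradedPiece (i : ℕ) : Module.Finite K (gradedPiece I i) := by
  unfold gradedPiece
  infer_instance

theorem hilbFn_eq_finrank_range {V W : Type*} [AddCommGroup V] [Module K V]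
    [AddCommGroup W] [Module K W] {s : V →ₗ[K] MvPolynomial (Fin n) K}
    (hs : LinearMap.range s = homogeneousSubmodule (Fin n) K i) {g : V →ₗ[K] W}
    (hg : ∀ v, g v = 0 ↔ s v ∈ I) :
    hilbFn I i = Module.finrank K (LinearMap.range g) := by
  rw [hilbFn, gradedPiece, ← hs, ← LinearMap.range_comp]
  refine finrank_range_eq_of_ker_eq (Submodule.ext fun v => ?_)
  simp [hg, Ideal.Quotient.eq_zero_iff_mem]

theorem hilbFn_congr (h : ∀ p : MvPolynomial (Fin n) K, p.IsHomogeneous i →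
    (p ∈ I ↔ p ∈ J)) : hilbFn I i = hilbFn J i := by
  refine hilbFn_eq_finrank_range (s := (homogeneousSubmodule (Fin n) K i).subtype)
    (Submodule.range_subtype _) (g := (Ideal.Quotient.mkₐ K J).toLinearMap ∘ₗ
      (homogeneousSubmodule (Fin n) K i).subtype) (fun p => ?_) |>.trans ?_
  · simp [Ideal.Quotient.eq_zero_iff_mem, h p.1 p.2]
  · rw [LinearMap.range_comp, Submodule.range_subtype]
    rfl

theorem hilbFn_eq_zero_iff :
    hilbFn I i = 0 ↔ ∀ p : MvPolynomial (Fin n) K, p.IsHomogeneous i → p ∈ I := by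
  rw [hilbFn, Submodule.finrank_eq_zero, gradedPiece, ← le_bot_iff, Submodule.map_le_iff_le_comap,
    SetLike.le_def]
  simp [Ideal.Quotient.eq_zero_iff_mem]

theorem map_gradedPiece_factorₐ (hIJ : I ≤ J) (i : ℕ) :
    (gradedPiece I i).map (Ideal.Quotient.factorₐ K hIJ).toLinearMap = gradedPiece J i := by
  rw [gradedPiece, ← Submodule.map_comp]
  rfl

theorem hilbFn_lt (hIJ : I ≤ J) {p : MvPolynomial (Fin n) K} (hp : p.IsHomogeneous i)
    (hpJ : p ∈ J) (hpI : p ∉ I) : hilbFn J i < hilbFn I i := by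
  let π : (MvPolynomial (Fin n) K ⧸ I) →ₗ[K] MvPolynomial (Fin n) K ⧸ J :=
    (Ideal.Quotient.factorₐ K hIJ).toLinearMap
  have hker : gradedPiece I i ⊓ LinearMap.ker π ≠ ⊥ := by
    refine Submodule.ne_bot_iff _ |>.mpr ⟨Ideal.Quotient.mk I p, ⟨⟨p, hp, rfl⟩, ?_⟩, ?_⟩
    · exact Ideal.Quotient.eq_zero_iff_mem.mpr hpJ
    · exact mt Ideal.Quotient.eq_zero_iff_mem.mp hpI
  have h := finrank_map_add_finrank_inf_ker π (gradedPiece I i)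
  have hpos := Submodule.one_le_finrank_iff.mpr hker
  rw [map_gradedPiece_factorₐ hIJ] at h
  unfold hilbFn
  omega

theorem homogeneousComponent_mul (hℓ : ℓ.IsHomogeneous e)
    (r : MvPolynomial (Fin n) K) (i : ℕ) :
    homogeneousComponent i (r * ℓ) = if e ≤ i then homogeneousComponent (i - e) r * ℓ else 0 := by
  let := MvPolynomial.gradedAlgebra (σ := Fin n) (R := K)
  simp only [← decomposition.decompose'_apply]
  exact DirectSum.coe_decompose_mul_of_right_mem (homogeneousSubmodule (Fin n) K) i hℓ

theorem exists_sub_mul_mem_of_mem_sup_span (hI : IsHomogIdeal I) (hℓ : ℓ.IsHomogeneous e)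
    {p : MvPolynomial (Fin n) K} (hp : p.IsHomogeneous (i + e)) (h : p ∈ I ⊔ Ideal.span {ℓ}) :
    ∃ r : MvPolynomial (Fin n) K, r.IsHomogeneous i ∧ p - r * ℓ ∈ I := by
  obtain ⟨r, b, hb, rfl⟩ := Ideal.mem_span_singleton_sup.mp (sup_comm I _ ▸ h)
  refine ⟨homogeneousComponent i r, homogeneousComponent_isHomogeneous i r, ?_⟩
  have h := congrArg (homogeneousComponent (i + e)) (add_sub_cancel_left (r * ℓ) b)
  rw [map_sub, homogeneousComponent_eq_self hp, homogeneousComponent_mul hℓ,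
    if_pos (Nat.le_add_left e i), Nat.add_sub_cancel] at h
  exact h ▸ hI b hb _

theorem mem_sup_span_iff_of_lt (hI : IsHomogIdeal I) (hℓ : ℓ.IsHomogeneous e)
    {p : MvPolynomial (Fin n) K} (hp : p.IsHomogeneous i) (hi : i < e) :
    p ∈ I ⊔ Ideal.span {ℓ} ↔ p ∈ I := by
  refine ⟨fun h => ?_, fun h => Ideal.mem_sup_left h⟩
  obtain ⟨r, b, hb, rfl⟩ := Ideal.mem_span_singleton_sup.mp (sup_comm I _ ▸ h)
  have h := hI b hb i
  rwa [← add_sub_cancel_left (r * ℓ) b, map_sub, homogeneousComponent_eq_self hp,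
    homogeneousComponent_mul hℓ, if_neg hi.not_ge, sub_zero] at h

theorem hilbFn_sup_span_of_lt (hI : IsHomogIdeal I) (hℓ : ℓ.IsHomogeneous e)
    (hi : i < e) : hilbFn (I ⊔ Ideal.span {ℓ}) i = hilbFn I i :=
  hilbFn_congr fun _ hp => mem_sup_span_iff_of_lt hI hℓ hp hi

theorem hilbFn_add_eq (hI : IsHomogIdeal I) (hℓ : ℓ.IsHomogeneous e) (i : ℕ) :
    hilbFn I (i + e) = hilbFn (I.colon {ℓ}) i + hilbFn (I ⊔ Ideal.span {ℓ}) (i + e) := by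
  let mk : MvPolynomial (Fin n) K →ₗ[K] MvPolynomial (Fin n) K ⧸ I :=
    (Ideal.Quotient.mkₐ K I).toLinearMap
  let π : (MvPolynomial (Fin n) K ⧸ I) →ₗ[K] MvPolynomial (Fin n) K ⧸ (I ⊔ Ideal.span {ℓ}) :=
    (Ideal.Quotient.factorₐ K le_sup_left).toLinearMap
  let μ : homogeneousSubmodule (Fin n) K i →ₗ[K] MvPolynomial (Fin n) K ⧸ I :=
    mk ∘ₗ LinearMap.mulRight K ℓ ∘ₗ (homogeneousSubmodule (Fin n) K i).subtype
  have hμ : gradedPiece I (i + e) ⊓ LinearMap.ker π = LinearMap.range μ := by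
    ext x
    constructor
    · rintro ⟨⟨p, hp, rfl⟩, hx⟩
      obtain ⟨r, hr, hpr⟩ := exists_sub_mul_mem_of_mem_sup_span hI hℓ hp
        (Ideal.Quotient.eq_zero_iff_mem.mp hx)
      exact ⟨⟨r, hr⟩, (Ideal.Quotient.eq.mpr hpr).symm⟩
    · rintro ⟨r, rfl⟩
      refine ⟨⟨r * ℓ, r.2.mul hℓ, rfl⟩, Ideal.Quotient.eq_zero_iff_mem.mpr ?_⟩
      exact Ideal.mem_sup_right (Ideal.mul_mem_left _ _ (Ideal.mem_span_singleton_self ℓ))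
  have hcolon : hilbFn (I.colon {ℓ}) i = Module.finrank K (LinearMap.range μ) :=
    hilbFn_eq_finrank_range (Submodule.range_subtype _) fun r => by
      rw [Submodule.mem_colon_singleton]
      exact Ideal.Quotient.eq_zero_iff_mem
  rw [hcolon, ← hμ, hilbFn, hilbFn, ← map_gradedPiece_factorₐ le_sup_left,
    ← finrank_map_add_finrank_inf_ker π, add_comm]

end HilbertFunction

/-! ### Macaulay duality -/

section AnnIdeal

variable {A : Type*} [CommRing A] [Algebra K A] {φ : A →ₗ[K] K}

/-- The annihilator of a linear functional `φ` on a commutative algebra, i.e. the largest ideal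
contained in its kernel. For a polynomial ring this is the ideal attached to the inverse system
generated by `φ`. -/
def annIdeal (φ : A →ₗ[K] K) : Ideal A where
  carrier := {p | ∀ q, φ (p * q) = 0}
  zero_mem' q := by simp
  add_mem' hp hq r := by rw [add_mul, map_add, hp r, hq r, add_zero]
  smul_mem' c p hp q := by rw [smul_eq_mul, mul_comm c, mul_assoc, hp]

theorem mem_annIdeal_iff {p : A} : p ∈ annIdeal φ ↔ ∀ q, φ (p * q) = 0 := Iff.rfl

theorem annIdeal_comp_mulLeft (φ : A →ₗ[K] K) (ℓ : A) :
    annIdeal (φ ∘ₗ LinearMap.mulLeft K ℓ) = (annIdeal φ).colon {ℓ} := by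
  ext p
  simp [Submodule.mem_colon_singleton, mem_annIdeal_iff, mul_assoc, mul_left_comm]

end AnnIdeal

theorem mem_annIdeal_iff_monomial {φ : MvPolynomial (Fin n) K →ₗ[K] K}
    {p : MvPolynomial (Fin n) K} : p ∈ annIdeal φ ↔ ∀ d, φ (p * monomial d 1) = 0 := by
  refine ⟨fun h d => h _, fun h => ?_⟩
  have hzero : φ ∘ₗ LinearMap.mulLeft K p = 0 :=
    (basisMonomials (Fin n) K).ext fun d => by simpa using h d
  exact fun q => LinearMap.congr_fun hzero q

/-- `φ` is homogeneous of degree `j`: it only depends on the component of degree `j` of its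
argument, so that it is a form of degree `j` in the divided power algebra. -/
def IsHomogFunctional (φ : MvPolynomial (Fin n) K →ₗ[K] K) (j : ℕ) : Prop :=
  ∀ k, k ≠ j → ∀ q : MvPolynomial (Fin n) K, q.IsHomogeneous k → φ q = 0

theorem isHomogFunctional_comp_homogeneousComponent (φ : MvPolynomial (Fin n) K →ₗ[K] K) (j : ℕ) :
    IsHomogFunctional (φ ∘ₗ homogeneousComponent j) j := fun k hk q hq => by
  rw [LinearMap.comp_apply, homogeneousComponent_of_mem hq, if_neg hk.symm, map_zero]

section IsHomogFunctional

variable {φ : MvPolynomial (Fin n) K →ₗ[K] K} {a b e j : ℕ} {ℓ p : MvPolynomial (Fin n) K}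

theorem isHomogFunctional_of_monomial (h : ∀ d : Fin n →₀ ℕ, d.degree ≠ j → φ (monomial d 1) = 0) :
    IsHomogFunctional φ j := fun k hk q hq => by
  rw [← q.support_sum_monomial_coeff, map_sum]
  refine Finset.sum_eq_zero fun d hd => ?_
  have hdk : d.degree = k := not_imp_comm.mp hq.coeff_eq_zero (mem_support_iff.mp hd)
  rw [← mul_one (coeff d q), ← smul_eq_mul, ← smul_monomial, map_smul, h d (hdk ▸ hk), smul_zero]

theorem IsHomogFunctional.comp_mulLeft (hφ : IsHomogFunctional φ (e + j)) (hℓ : ℓ.IsHomogeneous e) :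
    IsHomogFunctional (φ ∘ₗ LinearMap.mulLeft K ℓ) j := fun k hk q hq =>
  hφ (e + k) (by omega) (ℓ * q) (hℓ.mul hq)

theorem IsHomogFunctional.mem_annIdeal_of_lt (hφ : IsHomogFunctional φ j) (ha : j < a)
    (hp : p.IsHomogeneous a) : p ∈ annIdeal φ := mem_annIdeal_iff_monomial.mpr fun d =>
  hφ (a + d.degree) (by omega) _ (hp.mul (isHomogeneous_monomial _ rfl))

theorem IsHomogFunctional.hilbFn_eq_zero (hφ : IsHomogFunctional φ j) (ha : j < a) :
    hilbFn (annIdeal φ) a = 0 :=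
  hilbFn_eq_zero_iff.mpr fun _ hp => hφ.mem_annIdeal_of_lt ha hp

theorem IsHomogFunctional.mem_annIdeal_iff_forall_monomial (hφ : IsHomogFunctional φ (a + b))
    (hp : p.IsHomogeneous a) :
    p ∈ annIdeal φ ↔ ∀ d : Fin n →₀ ℕ, d.degree = b → φ (p * monomial d 1) = 0 := by
  refine ⟨fun h d _ => h _, fun h => mem_annIdeal_iff_monomial.mpr fun d => ?_⟩
  by_cases hd : d.degree = b
  · exact h d hd
  · exact hφ (a + d.degree) (by omega) _ (hp.mul (isHomogeneous_monomial _ rfl))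

theorem IsHomogFunctional.isHomogIdeal (hφ : IsHomogFunctional φ j) :
    IsHomogIdeal (annIdeal φ) := by
  intro p hp i
  have hi := homogeneousComponent_isHomogeneous i p
  rcases lt_or_ge j i with hij | hij
  · exact hφ.mem_annIdeal_of_lt hij hi
  obtain ⟨b, rfl⟩ := Nat.exists_eq_add_of_le hij
  refine (hφ.mem_annIdeal_iff_forall_monomial hi).mpr fun d hd => ?_
  have hcomp : ∀ k, k ≠ i → φ (homogeneousComponent k p * monomial d 1) = 0 := fun k hk =>
    hφ (k + d.degree) (by omega) _
      ((homogeneousComponent_isHomogeneous k p).mul (isHomogeneous_monomial _ rfl))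
  have hsum := hp (monomial d 1)
  rw [← sum_homogeneousComponent p, Finset.sum_mul, map_sum] at hsum
  rcases lt_or_ge p.totalDegree i with hlt | hle
  · rw [homogeneousComponent_eq_zero _ _ hlt, zero_mul, map_zero]
  · rwa [Finset.sum_eq_single_of_mem i (Finset.mem_range_succ_iff.mpr hle) fun k _ => hcomp k]
      at hsum

end IsHomogFunctional

/-! ### Artinian Gorenstein algebras and functionals -/

section Gorenstein

variable {I J : Ideal (MvPolynomial (Fin n) K)} {φ : MvPolynomial (Fin n) K →ₗ[K] K} {a b j : ℕ}
  {p s : MvPolynomial (Fin n) K}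

theorem mk_mem_socleSub_iff : Ideal.Quotient.mk I p ∈ socleSub I ↔ ∀ v, X v * p ∈ I := by
  simp only [socleSub, Submodule.mem_iInf, LinearMap.mem_ker, LinearMap.mulLeft_apply,
    ← map_mul, Ideal.Quotient.eq_zero_iff_mem]

theorem finrank_socleSub_eq_one_iff (hs : ∀ v, X v * s ∈ I) (hsI : s ∉ I) :
    Module.finrank K (socleSub I) = 1 ↔
      ∀ p, (∀ v, X v * p ∈ I) → ∃ c : K, c • s - p ∈ I := by
  let σ : socleSub I := ⟨Ideal.Quotient.mk I s, mk_mem_socleSub_iff.mpr hs⟩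
  have hσ : σ ≠ 0 := fun h => hsI (Ideal.Quotient.eq_zero_iff_mem.mp (congrArg Subtype.val h))
  have hsmul : ∀ (c : K) (p) (hp : Ideal.Quotient.mk I p ∈ socleSub I),
      c • σ = ⟨Ideal.Quotient.mk I p, hp⟩ ↔ c • s - p ∈ I := fun c p hp => by
    rw [← Ideal.Quotient.mk_eq_mk_iff_sub_mem, Subtype.ext_iff]
    rfl
  rw [finrank_eq_one_iff_of_nonzero' σ hσ]
  constructor
  · intro h p hp
    obtain ⟨c, hc⟩ := h ⟨_, mk_mem_socleSub_iff.mpr hp⟩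
    exact ⟨c, (hsmul c p _).mp hc⟩
  · rintro h ⟨x, hx⟩
    obtain ⟨p, rfl⟩ := Ideal.Quotient.mk_surjective x
    obtain ⟨c, hc⟩ := h p (mk_mem_socleSub_iff.mp hx)
    exact ⟨c, (hsmul c p hx).mpr hc⟩

theorem finiteDimensional_quotient_of_monomial_mem (N : ℕ)
    (h : ∀ d : Fin n →₀ ℕ, N < d.degree → monomial d (1 : K) ∈ I) :
    FiniteDimensional K (MvPolynomial (Fin n) K ⧸ I) := by
  let f := (Ideal.Quotient.mkₐ K I).toLinearMap
  have hf : LinearMap.range f = ⊤ := LinearMap.range_eq_top.mpr Ideal.Quotient.mk_surjective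
  refine Module.Finite.of_surjective (f ∘ₗ (restrictTotalDegree (Fin n) K N).subtype)
    (LinearMap.range_eq_top.mp ?_)
  rw [LinearMap.range_comp, Submodule.range_subtype, eq_top_iff, ← hf, LinearMap.range_eq_map,
    ← (basisMonomials (Fin n) K).span_eq, Submodule.map_span, Submodule.span_le]
  rintro _ ⟨_, ⟨d, rfl⟩, rfl⟩
  rw [coe_basisMonomials]
  by_cases hd : N < d.degree
  · have hfd : f (monomial d 1) = 0 := Ideal.Quotient.eq_zero_iff_mem.mpr (h d hd)
    exact hfd ▸ zero_mem _
  · refine Submodule.mem_map_of_mem ((mem_restrictTotalDegree _ _ _).mpr ?_)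
    exact (totalDegree_monomial_le _ _).trans (not_lt.mp hd)

theorem exists_monomial_ne_zero (h0 : φ ≠ 0) : ∃ d, φ (monomial d 1) ≠ 0 := by
  by_contra! h
  exact h0 ((basisMonomials (Fin n) K).ext fun d => by simpa using h d)

theorem map_mul_eq_mul_coeff_zero (hp : ∀ v, X v * p ∈ annIdeal φ) (q : MvPolynomial (Fin n) K) :
    φ (p * q) = coeff 0 q * φ p := by
  induction q using MvPolynomial.induction_on with
  | C c => rw [mul_comm, ← smul_eq_C_mul, map_smul, coeff_zero_C, smul_eq_mul]
  | add q r hq hr => rw [mul_add, map_add, hq, hr, coeff_add, add_mul]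
  | mul_X q v _ =>
    have hpq := hp v q
    rw [mul_comm (X v), mul_assoc, mul_comm (X v)] at hpq
    rw [hpq, coeff_mul_X', if_neg (by simp), zero_mul]

theorem IsHomogFunctional.isAG (hφ : IsHomogFunctional φ j) (h0 : φ ≠ 0) : IsAG (annIdeal φ) := by
  obtain ⟨d, hd⟩ := exists_monomial_ne_zero h0
  set s := monomial d (1 : K)
  have hdj : d.degree = j := by
    by_contra h
    exact hd (hφ _ h _ (isHomogeneous_monomial _ rfl))
  have hsI : s ∉ annIdeal φ := fun h => hd (by simpa using h 1)
  have hs : ∀ v, X v * s ∈ annIdeal φ := fun v =>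
    hφ.mem_annIdeal_of_lt (a := 1 + j) (by omega)
      ((isHomogeneous_X K v).mul (isHomogeneous_monomial _ hdj))
  refine ⟨hφ.isHomogIdeal, fun h => hsI (h ▸ Submodule.mem_top),
    finiteDimensional_quotient_of_monomial_mem j fun e he =>
      hφ.mem_annIdeal_of_lt he (isHomogeneous_monomial _ rfl), ?_⟩
  refine (finrank_socleSub_eq_one_iff hs hsI).mpr fun p hp => ⟨φ p / φ s, fun q => ?_⟩
  rw [sub_mul, map_sub, smul_mul_assoc, map_smul, map_mul_eq_mul_coeff_zero hs,
    map_mul_eq_mul_coeff_zero hp, smul_eq_mul, mul_left_comm, div_mul_cancel₀ _ hd, sub_self]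

theorem IsHomogIdeal.le_of_isHomogeneous (hI : IsHomogIdeal I)
    (h : ∀ a, ∀ p : MvPolynomial (Fin n) K, p.IsHomogeneous a → p ∈ I → p ∈ J) : I ≤ J := by
  intro p hp
  rw [← sum_homogeneousComponent p]
  exact Ideal.sum_mem _ fun i _ => h i _ (homogeneousComponent_isHomogeneous i p) (hI p hp i)

theorem IsAG.exists_X_mul_notMem (hI : IsAG I) (hv : hilbFn I (j + 1) = 0)
    (hs : s.IsHomogeneous j) (hsI : s ∉ I) (hp : p.IsHomogeneous a) (hpI : p ∉ I) (ha : a ≠ j) :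
    ∃ v, X v * p ∉ I := by
  obtain ⟨hhom, -, -, hsoc⟩ := hI
  by_contra! hpX
  have hsX : ∀ v, X v * s ∈ I := fun v =>
    hilbFn_eq_zero_iff.mp hv _ (add_comm 1 j ▸ (isHomogeneous_X K v).mul hs)
  obtain ⟨c, hc⟩ := (finrank_socleSub_eq_one_iff hsX hsI).mp hsoc p hpX
  have h := hhom _ hc a
  rw [map_sub, map_smul, homogeneousComponent_of_mem hp, homogeneousComponent_of_mem hs,
    if_pos rfl, if_neg ha, smul_zero, zero_sub, neg_mem_iff] at h
  exact hpI h

theorem IsAG.exists_mul_notMem (hI : IsAG I) (hv : hilbFn I (j + 1) = 0)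
    (hs : s.IsHomogeneous j) (hsI : s ∉ I) (hab : a + b = j) (hp : p.IsHomogeneous a)
    (hpI : p ∉ I) : ∃ q : MvPolynomial (Fin n) K, q.IsHomogeneous b ∧ p * q ∉ I := by
  induction b generalizing a p with
  | zero => exact ⟨1, isHomogeneous_one _ _, by rwa [mul_one]⟩
  | succ b ih =>
    obtain ⟨v, hvp⟩ := hI.exists_X_mul_notMem hv hs hsI hp hpI (by omega)
    obtain ⟨q, hq, hqI⟩ := ih (by omega) ((isHomogeneous_X K v).mul hp) hvp
    refine ⟨X v * q, add_comm 1 b ▸ (isHomogeneous_X K v).mul hq, ?_⟩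
    rwa [← mul_assoc, mul_comm p]

theorem IsAG.exists_functional_top (hI : IsAG I) (hj : hilbFn I j ≠ 0)
    (hv : hilbFn I (j + 1) = 0) :
    ∃ ψ : MvPolynomial (Fin n) K →ₗ[K] K, (∀ p ∈ I, ψ p = 0) ∧
      ∀ t : MvPolynomial (Fin n) K, t.IsHomogeneous j → ψ t = 0 → t ∈ I := by
  obtain ⟨s, hs, hsI⟩ : ∃ s : MvPolynomial (Fin n) K, s.IsHomogeneous j ∧ s ∉ I := by
    simpa using mt hilbFn_eq_zero_iff.mpr hj
  obtain ⟨ψ, hψs, hψI⟩ := Submodule.exists_le_ker_of_notMem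
    (p := I.restrictScalars K) (v := s) hsI
  refine ⟨ψ, fun p hp => hψI hp, fun t ht hψt => ?_⟩
  have hX : ∀ t : MvPolynomial (Fin n) K, t.IsHomogeneous j → ∀ v, X v * t ∈ I := fun t ht v =>
    hilbFn_eq_zero_iff.mp hv _ (add_comm 1 j ▸ (isHomogeneous_X K v).mul ht)
  obtain ⟨c, hc⟩ := (finrank_socleSub_eq_one_iff (hX s hs) hsI).mp hI.2.2.2 t (hX t ht)
  have hψ : ψ (c • s - t) = 0 := hψI hc
  have hc0 : c = 0 := by simpa [hψt, hψs] using hψ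
  simpa [hc0] using hc

theorem IsAG.exists_annIdeal_eq (hI : IsAG I) (hj : hilbFn I j ≠ 0)
    (hv : ∀ i, j < i → hilbFn I i = 0) :
    ∃ φ : MvPolynomial (Fin n) K →ₗ[K] K, IsHomogFunctional φ j ∧ annIdeal φ = I := by
  have hv' := hv (j + 1) j.lt_succ_self
  obtain ⟨s, hs, hsI⟩ : ∃ s : MvPolynomial (Fin n) K, s.IsHomogeneous j ∧ s ∉ I := by
    simpa using mt hilbFn_eq_zero_iff.mpr hj
  obtain ⟨ψ, hψI, hψ⟩ := hI.exists_functional_top hj hv'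
  have hφ := isHomogFunctional_comp_homogeneousComponent ψ j
  refine ⟨_, hφ, le_antisymm ?_ fun p hp q => hψI _ (hI.1 _ (I.mul_mem_right q hp) j)⟩
  refine hφ.isHomogIdeal.le_of_isHomogeneous fun a p hp hpφ => ?_
  rcases lt_or_ge j a with ha | ha
  · exact hilbFn_eq_zero_iff.mp (hv a ha) p hp
  by_contra hpI
  obtain ⟨b, rfl⟩ := Nat.exists_eq_add_of_le ha
  obtain ⟨q, hq, hpq⟩ := hI.exists_mul_notMem hv' hs hsI rfl hp hpI
  refine hpq (hψ _ (hp.mul hq) ?_)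
  rw [← hpφ q, LinearMap.comp_apply, homogeneousComponent_eq_self (hp.mul hq)]

end Gorenstein

/-! ### Catalecticant matrices -/

/-- The exponents of the monomials of degree `i` in `n` variables. -/
abbrev Expo (n i : ℕ) : Type := {d : Fin n →₀ ℕ // d.degree = i}

instance Expo.fintype (n i : ℕ) : Fintype (Expo n i) :=
  (Finsupp.finite_of_degree_le (σ := Fin n) i |>.subset fun _ h => le_of_eq h).fintype

theorem range_linearCombination_monomial (n i : ℕ) :
    LinearMap.range (Fintype.linearCombination K fun d : Expo n i => monomial d.1 (1 : K)) =
      homogeneousSubmodule (Fin n) K i := by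
  rw [Fintype.range_linearCombination, homogeneousSubmodule_eq_finsupp_supported,
    AddMonoidAlgebra.supported_eq_span_single]
  congr 1
  ext p
  simp [MvPolynomial.single_eq_monomial]

/-- The catalecticant matrix of `φ`: the matrix of the pairing `(p, q) ↦ φ (p * q)` between the
forms of degrees `a` and `b`. -/
def catMatrix (φ : MvPolynomial (Fin n) K →ₗ[K] K) (a b : ℕ) : Matrix (Expo n a) (Expo n b) K :=
  Matrix.of fun d e => φ (monomial d.1 1 * monomial e.1 1)

section Catalecticant

variable {φ : MvPolynomial (Fin n) K →ₗ[K] K} {a b j : ℕ}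

theorem transpose_catMatrix (φ : MvPolynomial (Fin n) K →ₗ[K] K) (a b : ℕ) :
    (catMatrix φ a b).transpose = catMatrix φ b a := by
  ext d e
  simp only [catMatrix, Matrix.transpose_apply, Matrix.of_apply, mul_comm]

theorem IsHomogFunctional.hilbFn_annIdeal_eq_rank (hφ : IsHomogFunctional φ (a + b)) :
    hilbFn (annIdeal φ) a = (catMatrix φ a b).rank := by
  rw [← Matrix.rank_transpose, transpose_catMatrix]
  refine hilbFn_eq_finrank_range (range_linearCombination_monomial (K := K) n a) fun c => ?_
  have hc : (Fintype.linearCombination K fun d : Expo n a => monomial d.1 (1 : K)) c ∈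
      homogeneousSubmodule (Fin n) K a :=
    range_linearCombination_monomial (K := K) n a ▸ LinearMap.mem_range_self _ c
  have hentry : ∀ e : Expo n b, (catMatrix φ b a).mulVecLin c e =
      φ ((Fintype.linearCombination K fun d : Expo n a => monomial d.1 (1 : K)) c *
        monomial e.1 1) := by
    intro e
    rw [Fintype.linearCombination_apply, Finset.sum_mul, map_sum]
    refine Finset.sum_congr rfl fun d _ => ?_
    rw [smul_mul_assoc, map_smul, smul_eq_mul, mul_comm (c d), mul_comm (monomial d.1 _)]
    rfl
  rw [hφ.mem_annIdeal_iff_forall_monomial hc, _root_.funext_iff, Subtype.forall]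
  exact forall₂_congr fun e he => by rw [hentry ⟨e, he⟩]; rfl

theorem IsHomogFunctional.hilbFn_annIdeal_symm (hφ : IsHomogFunctional φ (a + b)) :
    hilbFn (annIdeal φ) a = hilbFn (annIdeal φ) b := by
  rw [hφ.hilbFn_annIdeal_eq_rank, ← Matrix.rank_transpose, transpose_catMatrix,
    (add_comm a b ▸ hφ : IsHomogFunctional φ (b + a)).hilbFn_annIdeal_eq_rank]

theorem IsHomogFunctional.exists_extendScalars (hφ : IsHomogFunctional φ j) (L : Type*) [Field L]
    [Algebra K L] : ∃ φL : MvPolynomial (Fin n) L →ₗ[L] L, IsHomogFunctional φL j ∧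
      ∀ i, hilbFn (annIdeal φL) i = hilbFn (annIdeal φ) i := by
  let φL := (basisMonomials (Fin n) L).constr L fun d => algebraMap K L (φ (monomial d 1))
  have hφL : ∀ d, φL (monomial d 1) = algebraMap K L (φ (monomial d 1)) := fun d => by
    simpa only [coe_basisMonomials] using (basisMonomials (Fin n) L).constr_basis L _ d
  have hhom : IsHomogFunctional φL j := isHomogFunctional_of_monomial fun d hd => by
    rw [hφL, hφ _ hd _ (isHomogeneous_monomial _ rfl), map_zero]
  refine ⟨φL, hhom, fun i => ?_⟩
  rcases lt_or_ge j i with hij | hij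
  · rw [hhom.hilbFn_eq_zero hij, hφ.hilbFn_eq_zero hij]
  obtain ⟨b, rfl⟩ := Nat.exists_eq_add_of_le hij
  have hcat : catMatrix φL i b = (catMatrix φ i b).map (algebraMap K L) := by
    ext d e
    simp only [catMatrix, Matrix.map_apply, Matrix.of_apply, monomial_mul, mul_one, hφL]
  rw [hhom.hilbFn_annIdeal_eq_rank, hφ.hilbFn_annIdeal_eq_rank, hcat, rank_map_algebraMap]

end Catalecticant

/-! ### Two variables -/

section MonomialIdeal

variable {I : Ideal (MvPolynomial (Fin n) K)}

theorem coeff_linearCombination_monomial {i : ℕ} (c : Expo n i → K) (d : Fin n →₀ ℕ) :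
    coeff d ((Fintype.linearCombination K fun e : Expo n i => monomial e.1 (1 : K)) c) =
      if hd : d.degree = i then c ⟨d, hd⟩ else 0 := by
  simp only [Fintype.linearCombination_apply, coeff_sum, coeff_smul, coeff_monomial, smul_eq_mul,
    mul_ite, mul_one, mul_zero]
  split_ifs with hd
  · rw [Finset.sum_eq_single_of_mem ⟨d, hd⟩ (Finset.mem_univ _)
      fun e _ he => if_neg fun h => he (Subtype.ext h), if_pos rfl]
  · exact Finset.sum_eq_zero fun e _ => if_neg fun h => hd (by rw [← h, e.2])

theorem hilbFn_eq_card {B : Set (Fin n →₀ ℕ)} (hI : ∀ p, p ∈ I ↔ ∀ d ∈ B, coeff d p = 0) (i : ℕ) :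
    hilbFn I i = Nat.card {d : Expo n i // d.1 ∈ B} := by
  let g : (Expo n i → K) →ₗ[K] {d : Expo n i // d.1 ∈ B} → K := LinearMap.funLeft K K Subtype.val
  have hg : LinearMap.range g = ⊤ := LinearMap.range_eq_top.mpr
    (LinearMap.funLeft_surjective_of_injective K K _ Subtype.val_injective)
  rw [hilbFn_eq_finrank_range (range_linearCombination_monomial n i) (g := g), hg, finrank_top,
    Module.finrank_fintype_fun_eq_card, Nat.card_eq_fintype_card]
  intro c
  simp only [hI, coeff_linearCombination_monomial]
  constructor
  · intro h d hd
    split_ifs with hdi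
    · exact congrFun h ⟨⟨d, hdi⟩, hd⟩
    · rfl
  · exact fun h => funext fun d => (dif_pos d.1.2).symm.trans (h d.1.1 d.2)

theorem finrank_homogeneousSubmodule (n i : ℕ) :
    Module.finrank K (homogeneousSubmodule (Fin n) K i) = Nat.card (Expo n i) := by
  have hindep : LinearIndependent K fun d : Expo n i => monomial d.1 (1 : K) :=
    (basisMonomials (Fin n) K).linearIndependent.comp Subtype.val Subtype.val_injective
  rw [← range_linearCombination_monomial, Fintype.range_linearCombination,
    finrank_span_eq_card hindep, Nat.card_eq_fintype_card]

end MonomialIdeal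

theorem card_expo_two {i k : ℕ} (hk : k ≤ i + 1) :
    Nat.card {d : Expo 2 i // d.1 0 < k} = k := by
  let e : Fin k → {d : Expo 2 i // d.1 0 < k} := fun u =>
    ⟨⟨Finsupp.single 0 u.1 + Finsupp.single 1 (i - u.1), by
      simp only [map_add, Finsupp.degree_single]; omega⟩, by simp⟩
  have he : Function.Bijective e := by
    refine ⟨fun u w h => ?_, fun d => ⟨⟨d.1.1 0, d.2⟩, ?_⟩⟩
    · simpa [e, Fin.ext_iff] using congrArg (fun d => d.1.1 0) h
    · have hd := d.1.2
      rw [Finsupp.degree_eq_sum, Fin.sum_univ_two] at hd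
      refine Subtype.ext (Subtype.ext (Finsupp.ext fun v => ?_))
      fin_cases v <;> simp [e]
      omega
  rw [← Nat.card_eq_of_bijective e he, Nat.card_fin]

theorem finrank_homogeneousSubmodule_two (i : ℕ) :
    Module.finrank K (homogeneousSubmodule (Fin 2) K i) = i + 1 := by
  rw [finrank_homogeneousSubmodule, ← card_expo_two le_rfl, eq_comm]
  refine Nat.card_congr (Equiv.subtypeUnivEquiv fun d => Nat.lt_succ_of_le ?_)
  exact (Finsupp.le_degree 0 d.1).trans_eq d.2

/-- Macaulay's growth conditions for the Hilbert function of a quotient of a polynomial ring in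
two variables. -/
def IsOSeqTwo (δ : ℕ → ℕ) : Prop :=
  (∀ i, δ i ≤ i + 1) ∧ ∀ i, δ i ≤ i → δ (i + 1) ≤ δ i

theorem IsOSeqTwo.le_of_le {δ : ℕ → ℕ} (h : IsOSeqTwo δ) {i k : ℕ} (hi : δ i ≤ i) (hk : i ≤ k) :
    δ k ≤ δ i := by
  induction k, hk using Nat.le_induction with
  | base => exact le_rfl
  | succ k hk ih => exact (h.2 k (by omega)).trans ih

theorem exists_ideal_hilbFn_eq {I : Ideal (MvPolynomial (Fin n) K)} {m : ℕ} (h : hilbFn I 1 ≤ m) :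
    ∃ J : Ideal (MvPolynomial (Fin m) K), ∀ i, hilbFn J i = hilbFn I i := by
  obtain ⟨u, hu⟩ := exists_fun_fin_span_eq h
  let f : MvPolynomial (Fin m) K →ₐ[K] MvPolynomial (Fin n) K ⧸ I := aeval u
  refine ⟨RingHom.ker f, fun i => ?_⟩
  rw [hilbFn_eq_finrank_range (Submodule.range_subtype _)
    (g := f.toLinearMap ∘ₗ (homogeneousSubmodule (Fin m) K i).subtype) fun p => Iff.rfl]
  have hone : (homogeneousSubmodule (Fin m) K 1).map f.toLinearMap = gradedPiece I 1 := by
    rw [homogeneousSubmodule_one_eq_span_X, Submodule.map_span, ← Set.range_comp, ← hu]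
    congr 2
    ext v
    simp [f]
  rw [LinearMap.range_comp, Submodule.range_subtype, hilbFn, ← homogeneousSubmodule_one_pow,
    Submodule.map_pow, hone, gradedPiece, gradedPiece, ← Submodule.map_pow,
    homogeneousSubmodule_one_pow]

theorem finrank_lt_finrank_of_X_mul_mem {i : ℕ} {W W' : Submodule K (MvPolynomial (Fin 2) K)}
    [FiniteDimensional K W'] (hW : W ≤ homogeneousSubmodule (Fin 2) K i)
    (hX : ∀ p ∈ W, ∀ v, X v * p ∈ W') (hne : W ≠ ⊥) :
    Module.finrank K W < Module.finrank K W' := by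
  let μ := LinearMap.mulLeft K (X 0 : MvPolynomial (Fin 2) K)
  have hμ : Function.Injective μ := mul_right_injective₀ (X_ne_zero 0)
  have hle : W.map μ ≤ W' := Submodule.map_le_iff_le_comap.mpr fun p hp => hX p hp 0
  rw [(Submodule.equivMapOfInjective μ hμ W).finrank_eq]
  refine Submodule.finrank_lt_finrank_of_lt (hle.lt_of_ne fun heq => ?_)
  obtain ⟨w, hw, hw0⟩ := Submodule.exists_mem_ne_zero_of_ne_bot hne
  have hpow : ∀ k, ∃ q ∈ W, X 0 ^ k * q = X 1 ^ k * w := by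
    intro k
    induction k with
    | zero => exact ⟨w, hw, by simp⟩
    | succ k ih =>
      obtain ⟨q, hq, hqw⟩ := ih
      obtain ⟨r, hr, hrq⟩ := heq.symm.le (hX q hq 1)
      refine ⟨r, hr, ?_⟩
      rw [pow_succ, mul_assoc, show X 0 * r = X 1 * q from hrq, mul_left_comm, hqw, ← mul_assoc,
        ← pow_succ']
  obtain ⟨q, -, hq⟩ := hpow (i + 1)
  have hX1 : ¬ (X 0 : MvPolynomial (Fin 2) K) ∣ X 1 ^ (i + 1) := fun h => by
    simpa [X_dvd_X] using (X_prime (R := K)).dvd_of_dvd_pow h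
  obtain ⟨r, rfl⟩ := X_prime.pow_dvd_of_dvd_mul_left _ hX1 ⟨q, hq.symm⟩
  have hdeg := (show IsHomogeneous _ i from hW hw).totalDegree hw0
  rw [totalDegree_mul_of_isDomain (pow_ne_zero _ (X_ne_zero 0)) (right_ne_zero_of_mul hw0),
    totalDegree_X_pow] at hdeg
  omega

theorem isOSeqTwo_hilbFn_two (J : Ideal (MvPolynomial (Fin 2) K)) : IsOSeqTwo (hilbFn J) := by
  let W : ℕ → Submodule K (MvPolynomial (Fin 2) K) := fun i =>
    homogeneousSubmodule (Fin 2) K i ⊓ LinearMap.ker (Ideal.Quotient.mkₐ K J).toLinearMap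
  have hrank : ∀ i, hilbFn J i + Module.finrank K (W i) = i + 1 := fun i => by
    rw [hilbFn, gradedPiece, finrank_map_add_finrank_inf_ker, finrank_homogeneousSubmodule_two]
  refine ⟨fun i => by have := hrank i; omega, fun i hi => ?_⟩
  have : FiniteDimensional K (W (i + 1)) :=
    Submodule.finiteDimensional_of_le (S₂ := homogeneousSubmodule (Fin 2) K (i + 1)) inf_le_left
  have hlt : Module.finrank K (W i) < Module.finrank K (W (i + 1)) := by
    refine finrank_lt_finrank_of_X_mul_mem inf_le_left (fun p hp v => ?_) fun h => ?_
    · refine ⟨add_comm 1 i ▸ (isHomogeneous_X K v).mul hp.1, ?_⟩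
      have hpJ : Ideal.Quotient.mk J p = 0 := hp.2
      exact (map_mul (Ideal.Quotient.mk J) _ _).trans (by rw [hpJ, mul_zero])
    · have := hrank i
      rw [h, finrank_bot] at this
      omega
  have := hrank i
  have := hrank (i + 1)
  omega

theorem isOSeqTwo_hilbFn {I : Ideal (MvPolynomial (Fin n) K)} (h : hilbFn I 1 ≤ 2) :
    IsOSeqTwo (hilbFn I) := by
  obtain ⟨J, hJ⟩ := exists_ideal_hilbFn_eq h
  exact funext hJ ▸ isOSeqTwo_hilbFn_two J

/-- The lexicographic monomial ideal in two variables with Hilbert function `δ`. -/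
def lexIdeal (K : Type*) [Field K] {δ : ℕ → ℕ} (h : IsOSeqTwo δ) :
    Ideal (MvPolynomial (Fin 2) K) where
  carrier := {p | ∀ d : Fin 2 →₀ ℕ, d 0 < δ d.degree → coeff d p = 0}
  zero_mem' d _ := coeff_zero d
  add_mem' hp hq d hd := by rw [coeff_add, hp d hd, hq d hd, add_zero]
  smul_mem' c p hp d hd := by
    rw [smul_eq_mul, coeff_mul]
    refine Finset.sum_eq_zero fun ⟨a, b⟩ hab => ?_
    obtain rfl := Finset.HasAntidiagonal.mem_antidiagonal.mp hab
    rw [hp b (lt_of_not_ge fun hb => ?_), mul_zero]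
    have hdeg : b 0 ≤ b.degree := Finsupp.le_degree 0 b
    have hδ : δ (a.degree + b.degree) ≤ δ b.degree :=
      h.le_of_le (hb.trans hdeg) (Nat.le_add_left b.degree a.degree)
    rw [Finsupp.add_apply, map_add] at hd
    dsimp only at hd
    omega

theorem hilbFn_lexIdeal {δ : ℕ → ℕ} (h : IsOSeqTwo δ) (i : ℕ) : hilbFn (lexIdeal K h) i = δ i := by
  rw [hilbFn_eq_card (B := {d | d 0 < δ d.degree}) (fun _ => Iff.rfl), ← card_expo_two (h.1 i)]
  exact Nat.card_congr (Equiv.subtypeEquivRight fun d => by rw [Set.mem_ofPred_eq, d.2])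

theorem IsOSeqTwo.isOSequence {δ : ℕ → ℕ} (h : IsOSeqTwo δ) {N : ℕ} (hN : ∀ i, N < i → δ i = 0) :
    IsOSequence K fun i => (δ i : ℤ) := by
  refine ⟨2, lexIdeal K h, fun p hp i d hd => ?_, finiteDimensional_quotient_of_monomial_mem N
    fun d hd e he => ?_, fun i => by rw [hilbFn_lexIdeal]⟩
  · rw [coeff_homogeneousComponent, hp d hd, ite_self]
  · rw [coeff_monomial, if_neg]
    rintro rfl
    rw [hN _ hd] at he
    omega

/-! ### First half differences -/

/-- `δ` is the first half difference sequence of `T` in socle degree `j`, extended by zero. It is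
required to be natural-valued, so that `T` does not decrease up to degree `j / 2`. -/
structure IsFirstHalfDiff (T δ : ℕ → ℕ) (j : ℕ) : Prop where
  zero : δ 0 = T 0
  succ : ∀ i, 2 * (i + 1) ≤ j → T (i + 1) = T i + δ (i + 1)
  eq_zero : ∀ i, j < 2 * i → δ i = 0

section FirstHalfDiff

variable {T δ : ℕ → ℕ} {j : ℕ}

theorem IsFirstHalfDiff.sum_eq (h : IsFirstHalfDiff T δ j) {i : ℕ} (hi : 2 * i ≤ j) :
    ∑ k ∈ Finset.range (i + 1), δ k = T i := by
  induction i with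
  | zero => rw [zero_add, Finset.sum_range_one, h.zero]
  | succ i ih => rw [Finset.sum_range_succ, ih (by omega), h.succ i hi]

theorem isFirstHalfDiff_iff (h0 : T 0 = 1) : IsFirstHalfDiff T δ j ↔ ∀ i, (δ i : ℤ) =
    if i = 0 then 1 else if 2 * i ≤ j then (T i : ℤ) - (T (i - 1) : ℤ) else 0 := by
  refine ⟨fun h i => ?_, fun h => ⟨by simpa [h0] using h 0, fun i hi => ?_, fun i hi => ?_⟩⟩
  · rcases i with - | i
    · simp [h.zero, h0]
    rw [if_neg i.succ_ne_zero]
    split_ifs with hi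
    · simp [h.succ i hi]
    · simp [h.eq_zero (i + 1) (not_le.mp hi)]
  · have hi' := h (i + 1)
    rw [if_neg i.succ_ne_zero, if_pos hi, Nat.add_sub_cancel] at hi'
    omega
  · have hi' := h i
    rw [if_neg (by omega), if_neg (by omega)] at hi'
    exact_mod_cast hi'

theorem isOSequence_firstHalfDiff_iff (h0 : T 0 = 1) (h1 : T 1 ≤ 3) :
    IsOSequence K (fun i =>
      if i = 0 then 1 else if 2 * i ≤ j then (T i : ℤ) - (T (i - 1) : ℤ) else 0) ↔
      ∃ δ, IsOSeqTwo δ ∧ IsFirstHalfDiff T δ j := by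
  constructor
  · rintro ⟨m, I, -, -, hI⟩
    have hδ : IsFirstHalfDiff T (hilbFn I) j := (isFirstHalfDiff_iff h0).mpr hI
    refine ⟨hilbFn I, isOSeqTwo_hilbFn ?_, hδ⟩
    rcases lt_or_ge j 2 with hj | hj
    · have := hδ.eq_zero 1 hj
      omega
    · have := hδ.succ 0 hj
      rw [zero_add] at this
      omega
  · rintro ⟨δ, hO, hδ⟩
    rw [← funext ((isFirstHalfDiff_iff h0).mp hδ)]
    exact hO.isOSequence fun i (hi : j < i) => hδ.eq_zero i (by omega)

end FirstHalfDiff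

/-! ### First half differences of Hilbert functions of Gorenstein algebras -/

section Necessity

variable {I : Ideal (MvPolynomial (Fin n) K)} {φ : MvPolynomial (Fin n) K →ₗ[K] K}
  {ℓ : MvPolynomial (Fin n) K} {a b : ℕ}

theorem hilbFn_one_le (I : Ideal (MvPolynomial (Fin n) K)) : hilbFn I 1 ≤ n := by
  refine (Submodule.finrank_map_le _ _).trans ?_
  rw [homogeneousSubmodule_one_eq_span_X]
  exact (finrank_range_le_card X).trans_eq (Fintype.card_fin n)

theorem hilbFn_one_lt (hℓ : ℓ.IsHomogeneous 1) (h0 : ℓ ≠ 0) (hI : ℓ ∈ I) : hilbFn I 1 < n :=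
  (hilbFn_lt bot_le hℓ hI h0).trans_le (hilbFn_one_le ⊥)

theorem hilbFn_colon_eq (hℓ : ℓ.IsHomogeneous b) (h0 : ℓ ≠ 0)
    (h : ∀ p : MvPolynomial (Fin n) K, p.IsHomogeneous (a + b) → p ∈ I → p = 0) :
    hilbFn (I.colon {ℓ}) a = hilbFn I a := by
  refine hilbFn_congr fun p hp => ?_
  rw [Submodule.mem_colon_singleton, smul_eq_mul]
  refine ⟨fun hpℓ => ?_, fun hpI => I.mul_mem_right ℓ hpI⟩
  rw [(mul_eq_zero_iff_right h0).mp (h _ (hp.mul hℓ) hpℓ)]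
  exact I.zero_mem

theorem IsHomogFunctional.hilbFn_succ_add (hφ : IsHomogFunctional φ (a + b + 1))
    (hℓ : ℓ.IsHomogeneous 1) :
    hilbFn (annIdeal φ) (a + 1) + hilbFn (annIdeal φ ⊔ Ideal.span {ℓ}) (b + 1) =
      hilbFn (annIdeal φ) a + hilbFn (annIdeal φ ⊔ Ideal.span {ℓ}) (a + 1) := by
  have hcolon : hilbFn ((annIdeal φ).colon {ℓ}) a = hilbFn ((annIdeal φ).colon {ℓ}) b := by
    rw [← annIdeal_comp_mulLeft]
    exact ((add_comm (a + b) 1 ▸ hφ : IsHomogFunctional φ (1 + (a + b))).comp_mulLeft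
      hℓ).hilbFn_annIdeal_symm
  have hsymm : hilbFn (annIdeal φ) a = hilbFn (annIdeal φ) (b + 1) :=
    (add_assoc a b 1 ▸ hφ : IsHomogFunctional φ (a + (b + 1))).hilbFn_annIdeal_symm
  have ha := hilbFn_add_eq hφ.isHomogIdeal hℓ a
  have hb := hilbFn_add_eq hφ.isHomogIdeal hℓ b
  omega

theorem IsHomogFunctional.hilbFn_sup_span_eq_zero (hφ : IsHomogFunctional φ (a + b))
    (hℓ : ℓ.IsHomogeneous 1) (h0 : ℓ ≠ 0)
    (h : ∀ p : MvPolynomial (Fin n) K, p.IsHomogeneous a → p ∈ annIdeal φ → p = 0) :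
    hilbFn (annIdeal φ ⊔ Ideal.span {ℓ}) (b + 1) = 0 := by
  rcases a with - | a
  · have hb := hilbFn_add_eq hφ.isHomogIdeal hℓ b
    rw [hφ.hilbFn_eq_zero (by omega)] at hb
    omega
  · rw [add_right_comm] at hφ
    have hsucc := hφ.hilbFn_succ_add hℓ
    have ha := hilbFn_add_eq hφ.isHomogIdeal hℓ a
    rw [hilbFn_colon_eq hℓ h0 h] at ha
    omega

theorem exists_isHomogeneous_one_not_dvd [Infinite K] [Nontrivial (Fin n)]
    {p : MvPolynomial (Fin n) K} (hp : p ≠ 0) :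
    ∃ ℓ : MvPolynomial (Fin n) K, ℓ.IsHomogeneous 1 ∧ ℓ ≠ 0 ∧ ¬ ℓ ∣ p := by
  obtain ⟨x, hx⟩ : ∃ x, eval x p ≠ 0 := by
    by_contra! h
    exact hp (MvPolynomial.funext fun x => by rw [h, map_zero])
  suffices h : ∃ ℓ : MvPolynomial (Fin n) K, ℓ.IsHomogeneous 1 ∧ ℓ ≠ 0 ∧ eval x ℓ = 0 by
    obtain ⟨ℓ, hℓ, h0, hℓx⟩ := h
    exact ⟨ℓ, hℓ, h0, fun hdvd => hx (zero_dvd_iff.mp (hℓx ▸ map_dvd (eval x) hdvd))⟩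
  obtain ⟨v, w, hvw⟩ := exists_pair_ne (Fin n)
  by_cases hv : x v = 0
  · exact ⟨X v, isHomogeneous_X K v, X_ne_zero v, by rw [eval_X, hv]⟩
  refine ⟨C (x v) * X w - C (x w) * X v, (isHomogeneous_C_mul_X _ _).sub
    (isHomogeneous_C_mul_X _ _), fun h => hv ?_, by simp [mul_comm]⟩
  simpa [coeff_C_mul, coeff_X, hvw, hvw.symm, Finsupp.single_left_inj] using
    congrArg (coeff (Finsupp.single w 1)) h

end Necessity

theorem exists_isFirstHalfDiff_of_succ_add_eq {h d : ℕ → ℕ} {a j : ℕ} (hd : IsOSeqTwo d)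
    (h0 : d 0 = h 0)
    (hsucc : ∀ i < j, h (i + 1) + d (j - i) = h i + d (i + 1)) (ha : d a ≤ a)
    (hlow : ∀ i < a, i ≤ j → d (j + 1 - i) = 0) :
    ∃ δ, IsOSeqTwo δ ∧ IsFirstHalfDiff h δ j := by
  have hanti : ∀ {i k}, a ≤ i → i ≤ k → d k ≤ d i := fun {i k} hai hik =>
    hd.le_of_le ((hd.le_of_le ha hai).trans (ha.trans hai)) hik
  have hle : ∀ i, 2 * i ≤ j → d (j + 1 - i) ≤ d i := fun i hi => by
    rcases lt_or_ge i a with hia | hia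
    · rw [hlow i hia (by omega)]
      exact Nat.zero_le _
    · exact hanti hia (by omega)
  refine ⟨fun i => if 2 * i ≤ j then d i - d (j + 1 - i) else 0, ⟨fun i => ?_, fun i hi => ?_⟩,
    ⟨?_, fun i hi => ?_, fun i hi => if_neg hi.not_ge⟩⟩
  · have := hd.1 i
    dsimp only
    split_ifs <;> omega
  · dsimp only at hi ⊢
    split_ifs at hi ⊢ with h1 h2 <;> try omega
    rw [Nat.add_sub_add_right]
    rcases lt_or_ge i a with hia | hia
    · have := hlow i hia (by omega)
      have := hd.2 i (by omega)
      omega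
    · have := hanti hia (Nat.le_add_right i 1)
      have := hanti (i := j - i) (k := j + 1 - i) (by omega) (by omega)
      omega
  · have := hle 0 (by omega)
    rcases Nat.eq_zero_or_pos a with rfl | hpos
    · have : d (j + 1) ≤ d 0 := hanti le_rfl (Nat.zero_le _)
      simp only [mul_zero, Nat.zero_le, if_true, Nat.sub_zero]
      omega
    · have hj0 : d (j + 1) = 0 := hlow 0 hpos (Nat.zero_le j)
      simp [hj0, h0]
  · have := hsucc i (by omega)
    have := hle (i + 1) hi
    rw [Nat.add_sub_add_right] at this
    rw [if_pos hi, Nat.add_sub_add_right]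
    omega

theorem IsHomogFunctional.exists_isFirstHalfDiff [Infinite K]
    {φ : MvPolynomial (Fin 3) K →ₗ[K] K} {j : ℕ} (hφ : IsHomogFunctional φ j) :
    ∃ δ, IsOSeqTwo δ ∧ IsFirstHalfDiff (hilbFn (annIdeal φ)) δ j := by
  have hex : ∃ a, ∃ p : MvPolynomial (Fin 3) K, p.IsHomogeneous a ∧ p ∈ annIdeal φ ∧ p ≠ 0 := by
    have hX : (X 0 ^ (j + 1) : MvPolynomial (Fin 3) K).IsHomogeneous (j + 1) :=
      isHomogeneous_X_pow 0 _
    exact ⟨j + 1, _, hX, hφ.mem_annIdeal_of_lt j.lt_succ_self hX, pow_ne_zero _ (X_ne_zero 0)⟩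
  obtain ⟨p, hp, hpφ, hp0⟩ := Nat.find_spec hex
  obtain ⟨ℓ, hℓ, h0, hℓp⟩ := exists_isHomogeneous_one_not_dvd hp0
  have hlin : ∀ {J : Ideal (MvPolynomial (Fin 3) K)}, Ideal.span {ℓ} ≤ J → IsOSeqTwo (hilbFn J) :=
    fun hJ => isOSeqTwo_hilbFn (Nat.le_of_lt_succ
      (hilbFn_one_lt hℓ h0 (hJ (Ideal.mem_span_singleton_self ℓ))))
  have ha : hilbFn (annIdeal φ ⊔ Ideal.span {ℓ}) (Nat.find hex) ≤ Nat.find hex := by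
    have hlt := hilbFn_lt le_sup_right hp (Ideal.mem_sup_left hpφ)
      (mt Ideal.mem_span_singleton.mp hℓp)
    exact Nat.le_of_lt_succ (hlt.trans_le ((hlin le_rfl).1 _))
  refine exists_isFirstHalfDiff_of_succ_add_eq (hlin le_sup_right)
    (hilbFn_sup_span_of_lt hφ.isHomogIdeal hℓ one_pos) (fun i hi => ?_) ha fun i hi hij => ?_
  · obtain ⟨b, rfl⟩ := Nat.exists_eq_add_of_lt hi
    rw [show i + b + 1 - i = b + 1 by omega]
    exact hφ.hilbFn_succ_add hℓ
  · obtain ⟨b, rfl⟩ := Nat.exists_eq_add_of_le hij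
    rw [show i + b + 1 - i = b + 1 by omega]
    refine hφ.hilbFn_sup_span_eq_zero hℓ h0 fun q hq hqφ => ?_
    by_contra hq0
    exact Nat.find_min hex hi ⟨q, hq, hqφ, hq0⟩

theorem IsAG.exists_isFirstHalfDiff {I : Ideal (MvPolynomial (Fin 3) K)} (hI : IsAG I) {j : ℕ}
    (hj : hilbFn I j ≠ 0) (hv : ∀ i, j < i → hilbFn I i = 0) :
    ∃ δ, IsOSeqTwo δ ∧ IsFirstHalfDiff (hilbFn I) δ j := by
  obtain ⟨φ, hφ, rfl⟩ := hI.exists_annIdeal_eq hj hv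
  obtain ⟨φL, hφL, hL⟩ := hφ.exists_extendScalars (AlgebraicClosure K)
  exact funext hL ▸ hφL.exists_isFirstHalfDiff

/-! ### Complete intersections in the affine plane -/

section Affine

open scoped Polynomial.Bivariate Polynomial

variable {φ φ' : K[X][Y] →ₗ[K] K} {f g H Q : K[X][Y]} {N i k : ℕ}

/-- Setting the last of three variables to one, which restricts forms to an affine plane. -/
def dehomog (K : Type*) [Field K] : MvPolynomial (Fin 3) K →ₐ[K] K[X][Y] :=
  aeval ![Y, Polynomial.C Polynomial.X, 1]

/-- The bivariate polynomials of total degree at most `i`, encoded as the dehomogenizations of the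
ternary forms of degree `i`. -/
def totalDegLE (K : Type*) [Field K] (i : ℕ) : Submodule K K[X][Y] :=
  (homogeneousSubmodule (Fin 3) K i).map (dehomog K).toLinearMap

instance finite_totalDegLE : Module.Finite K (totalDegLE K i) := by
  unfold totalDegLE
  infer_instance

theorem dehomog_mem_totalDegLE {p : MvPolynomial (Fin 3) K} (hp : p.IsHomogeneous i) :
    dehomog K p ∈ totalDegLE K i := ⟨p, hp, rfl⟩

theorem mul_mem_totalDegLE (hf : f ∈ totalDegLE K i) (hg : g ∈ totalDegLE K k) :
    f * g ∈ totalDegLE K (i + k) := by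
  obtain ⟨p, hp, rfl⟩ := hf
  obtain ⟨q, hq, rfl⟩ := hg
  exact ⟨p * q, hp.mul hq, map_mul (dehomog K) p q⟩

theorem totalDegLE_mono (h : i ≤ k) : totalDegLE K i ≤ totalDegLE K k := fun f hf => by
  obtain ⟨e, rfl⟩ := Nat.exists_eq_add_of_le h
  have hone : (1 : K[X][Y]) ∈ totalDegLE K e :=
    ⟨X 2 ^ e, isHomogeneous_X_pow 2 e, by simp [dehomog]⟩
  exact mul_one f ▸ mul_mem_totalDegLE hf hone

theorem Y_mul_mem_totalDegLE (hf : f ∈ totalDegLE K i) : Y * f ∈ totalDegLE K (i + 1) :=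
  add_comm 1 i ▸ mul_mem_totalDegLE ⟨X 0, isHomogeneous_X K 0, by simp [dehomog]⟩ hf

theorem C_X_pow_mem_totalDegLE (i : ℕ) :
    Polynomial.C (Polynomial.X ^ i : K[X]) ∈ totalDegLE K i :=
  ⟨X 1 ^ i, isHomogeneous_X_pow 1 i, by simp [dehomog]⟩

theorem C_mem_totalDegLE {p : K[X]} (hp : p ∈ Polynomial.degreeLT K (i + 1)) :
    Polynomial.C p ∈ totalDegLE K i := by
  suffices h : Polynomial.degreeLT K (i + 1) ≤
      (totalDegLE K i).comap (IsScalarTower.toAlgHom K K[X] K[X][Y]).toLinearMap from h hp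
  rw [Polynomial.degreeLT_eq_span_X_pow, Submodule.span_le]
  intro q hq
  obtain ⟨k, hk, rfl⟩ := Finset.mem_image.mp hq
  exact totalDegLE_mono (Finset.mem_range_succ_iff.mp hk) (C_X_pow_mem_totalDegLE k)

theorem exists_eq_C_add_Y_mul (hf : f ∈ totalDegLE K (i + 1)) :
    ∃ p ∈ Polynomial.degreeLT K (i + 2), ∃ r ∈ totalDegLE K i,
      f = Polynomial.C p + Y * r := by
  let S : Submodule K K[X][Y] :=
    (Polynomial.degreeLT K (i + 2)).map (IsScalarTower.toAlgHom K K[X] K[X][Y]).toLinearMap ⊔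
      (totalDegLE K i).map (LinearMap.mulLeft K Y)
  suffices h : totalDegLE K (i + 1) ≤ S by
    obtain ⟨-, ⟨p, hp, rfl⟩, -, ⟨r, hr, rfl⟩, rfl⟩ := Submodule.mem_sup.mp (h hf)
    exact ⟨p, hp, r, hr, rfl⟩
  rw [totalDegLE, ← range_linearCombination_monomial, Fintype.range_linearCombination,
    Submodule.map_span, Submodule.span_le]
  rintro - ⟨-, ⟨⟨d, hd⟩, rfl⟩, rfl⟩
  by_cases hd0 : d 0 = 0
  · refine Submodule.mem_sup_left ⟨Polynomial.X ^ d 1, ?_, ?_⟩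
    · refine Polynomial.mem_degreeLT.mpr ((Polynomial.degree_X_pow_le _).trans_lt ?_)
      exact_mod_cast Nat.lt_succ_of_le ((Finsupp.le_degree 1 d).trans_eq hd)
    · simp [dehomog, aeval_monomial, Finsupp.prod_fintype, Fin.prod_univ_three, hd0]
  · obtain ⟨e, rfl⟩ : ∃ e, d = Finsupp.single 0 1 + e :=
      ⟨_, (add_tsub_cancel_of_le (Finsupp.single_le_iff.mpr (Nat.one_le_iff_ne_zero.mpr hd0))).symm⟩
    have he : e.degree = i := by
      rw [map_add, Finsupp.degree_single] at hd
      omega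
    refine Submodule.mem_sup_right
      ⟨dehomog K (monomial e 1), dehomog_mem_totalDegLE (isHomogeneous_monomial _ he), ?_⟩
    simp [dehomog, aeval_monomial, Finsupp.prod_fintype, Fin.prod_univ_three, pow_add, mul_assoc]

/-- The polynomials of total degree at most `i` in the quotient by the annihilator of `φ`. -/
def truncQuot (φ : K[X][Y] →ₗ[K] K) (i : ℕ) : Submodule K (K[X][Y] ⧸ annIdeal φ) :=
  (totalDegLE K i).map (Ideal.Quotient.mkₐ K (annIdeal φ)).toLinearMap

instance finite_truncQuot : Module.Finite K (truncQuot φ i) := by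
  unfold truncQuot
  infer_instance

/-- The annihilator of `φ` contains the equations of a complete intersection: a curve of degree
`N + 1` and the union of the line `Y = 0` with the curve `Q = 0`. The curve does not contain the
line, on which its equation is normalized to `X ^ (N + 1)`, so that only the remaining part `H` is
recorded. The last field bounds the degree of representatives modulo the annihilator. -/
structure IsCIPair (φ : K[X][Y] →ₗ[K] K) (H Q : K[X][Y]) (N : ℕ) : Prop where
  left_mem : Polynomial.C (Polynomial.X ^ (N + 1)) + Y * H ∈ annIdeal φ
  right_mem : Y * Q ∈ annIdeal φ
  notMem : Polynomial.C (Polynomial.X ^ N) * Q ∉ annIdeal φ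
  left_mem_totalDegLE : H ∈ totalDegLE K N
  right_mem_totalDegLE : Q ∈ totalDegLE K N
  exists_sub_mem : ∀ f, ∃ f' ∈ totalDegLE K N, f - f' ∈ annIdeal φ

theorem C_sub_mem_of_add_mem {I : Ideal K[X][Y]} {q : K[X]}
    (h : Polynomial.C q + Y * H ∈ I) (p : K[X]) :
    Polynomial.C p - (Polynomial.C (p %ₘ q) - Y * (H * Polynomial.C (p /ₘ q))) ∈ I := by
  have hp : Polynomial.C (p %ₘ q) + Polynomial.C q * Polynomial.C (p /ₘ q) = Polynomial.C p := by
    rw [← map_mul, ← map_add, Polynomial.modByMonic_add_div]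
  convert I.mul_mem_right (Polynomial.C (p /ₘ q)) h using 1
  linear_combination -hp

theorem X_pow_dvd_of_mem {J : Ideal K[X]} (hJ : Polynomial.X ^ (N + 1) ∈ J)
    (hN : Polynomial.X ^ N ∉ J) {p : K[X]} (hp : p ∈ J) : Polynomial.X ^ (N + 1) ∣ p := by
  obtain ⟨q, rfl⟩ := IsPrincipalIdealRing.principal J
  simp only [Ideal.submodule_span_eq, Ideal.mem_span_singleton] at hJ hN hp
  obtain ⟨k, hk, hqk⟩ := (dvd_prime_pow Polynomial.prime_X _).mp hJ
  have hNk : N < k := not_le.mp fun hkN => hN (hqk.dvd.trans (pow_dvd_pow _ hkN))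
  rw [show N + 1 = k by omega]
  exact hqk.symm.dvd.trans hp

theorem IsCIPair.X_pow_dvd (h : IsCIPair φ H Q N) {p : K[X]} {r : K[X][Y]}
    (hr : Polynomial.C p + Y * r ∈ annIdeal φ) : Polynomial.X ^ (N + 1) ∣ p := by
  have hJ : ∀ {q s}, Polynomial.C q + Y * s ∈ annIdeal φ →
      q ∈ ((annIdeal φ).colon {Q}).comap Polynomial.C := fun {q s} hq => by
    rw [Ideal.mem_comap, Submodule.mem_colon_singleton, smul_eq_mul]
    convert sub_mem (Ideal.mul_mem_right Q _ hq) (Ideal.mul_mem_right s _ h.right_mem) using 1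
    ring
  refine X_pow_dvd_of_mem (hJ h.left_mem) (fun hN => h.notMem ?_) (hJ hr)
  rwa [Ideal.mem_comap, Submodule.mem_colon_singleton] at hN

theorem mem_degreeLT_succ_iff {p : K[X]} : p ∈ Polynomial.degreeLT K (k + 1) ↔ p.natDegree ≤ k := by
  rw [Polynomial.degreeLT_succ_eq_degreeLE, Polynomial.mem_degreeLE,
    Polynomial.natDegree_le_iff_degree_le]

theorem modByMonic_X_pow_mem_degreeLT (p : K[X]) (k : ℕ) :
    p %ₘ Polynomial.X ^ k ∈ Polynomial.degreeLT K k := by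
  rw [Polynomial.mem_degreeLT, ← Polynomial.degree_X_pow (R := K)]
  exact Polynomial.degree_modByMonic_lt p (Polynomial.monic_X_pow k)

theorem IsCIPair.exists_sub_mem_of_mem_totalDegLE (h : IsCIPair φ H Q N)
    (hf : f ∈ totalDegLE K (i + 1)) : ∃ p ∈ Polynomial.degreeLT K (min (i + 2) (N + 1)),
      ∃ r ∈ totalDegLE K i, f - (Polynomial.C p + Y * r) ∈ annIdeal φ := by
  obtain ⟨p, hp, r, hr, rfl⟩ := exists_eq_C_add_Y_mul hf
  rcases lt_or_ge i N with hiN | hNi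
  · rw [min_eq_left (by omega)]
    exact ⟨p, hp, r, hr, by rw [sub_self]; exact zero_mem _⟩
  have hquot : p /ₘ Polynomial.X ^ (N + 1) ∈ Polynomial.degreeLT K (i - N + 1) := by
    rw [mem_degreeLT_succ_iff] at hp ⊢
    rw [Polynomial.natDegree_divByMonic _ (Polynomial.monic_X_pow _), Polynomial.natDegree_X_pow]
    omega
  have hHquot := mul_mem_totalDegLE h.left_mem_totalDegLE (C_mem_totalDegLE hquot)
  rw [show N + (i - N) = i by omega] at hHquot
  refine ⟨p %ₘ Polynomial.X ^ (N + 1), ?_, _, sub_mem hr hHquot, ?_⟩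
  · rw [min_eq_right (by omega)]
    exact modByMonic_X_pow_mem_degreeLT p _
  · convert C_sub_mem_of_add_mem h.left_mem p using 1
    ring

theorem Y_mul_mem_annIdeal_iff (hφ : ∀ r, φ (Y * r) = φ' r) :
    Y * f ∈ annIdeal φ ↔ f ∈ annIdeal φ' := by
  simp only [mem_annIdeal_iff, mul_assoc, hφ]

theorem finrank_degreeLT (k : ℕ) : Module.finrank K (Polynomial.degreeLT K k) = k := by
  rw [(Polynomial.degreeLTEquiv K k).finrank_eq, Module.finrank_fin_fun]

theorem IsCIPair.C_add_Y_mul_mem_iff (h : IsCIPair φ H Q N) (hφ : ∀ r, φ (Y * r) = φ' r)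
    {p : K[X]} (hp : p ∈ Polynomial.degreeLT K (N + 1)) :
    Polynomial.C p + Y * f ∈ annIdeal φ ↔ p = 0 ∧ f ∈ annIdeal φ' := by
  rw [← Y_mul_mem_annIdeal_iff hφ]
  refine ⟨fun hpf => ?_, fun ⟨hp0, hf⟩ => by rwa [hp0, map_zero, zero_add]⟩
  have hp0 : p = 0 := Polynomial.eq_zero_of_dvd_of_degree_lt (h.X_pow_dvd hpf)
    (by rwa [Polynomial.degree_X_pow, ← Polynomial.mem_degreeLT])
  rw [hp0, map_zero, zero_add] at hpf
  exact ⟨hp0, hpf⟩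

theorem IsCIPair.finrank_truncQuot_succ (h : IsCIPair φ H Q N) (hφ : ∀ r, φ (Y * r) = φ' r)
    (i : ℕ) : Module.finrank K (truncQuot φ (i + 1)) =
      Module.finrank K (truncQuot φ' i) + min (i + 2) (N + 1) := by
  let D := Polynomial.degreeLT K (min (i + 2) (N + 1))
  let s : totalDegLE K i × D →ₗ[K] K[X][Y] :=
    (LinearMap.mulLeft K Y ∘ₗ (totalDegLE K i).subtype).coprod
      ((IsScalarTower.toAlgHom K K[X] K[X][Y]).toLinearMap ∘ₗ D.subtype)
  have hs : ∀ r p, s (r, p) = Polynomial.C p.1 + Y * r.1 := fun r p => add_comm _ _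
  let u : totalDegLE K i × D →ₗ[K] K[X][Y] ⧸ annIdeal φ :=
    (Ideal.Quotient.mkₐ K (annIdeal φ)).toLinearMap ∘ₗ s
  let v : totalDegLE K i × D →ₗ[K] truncQuot φ' i × D :=
    ((Ideal.Quotient.mkₐ K (annIdeal φ')).toLinearMap.submoduleMap (totalDegLE K i)).prodMap .id
  have hker : LinearMap.ker u = LinearMap.ker v := by
    ext ⟨r, p⟩
    have hp := Polynomial.degreeLT_mono (min_le_right _ _) p.2
    have hu : u (r, p) = 0 ↔ s (r, p) ∈ annIdeal φ := Ideal.Quotient.eq_zero_iff_mem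
    have hv : v (r, p) = 0 ↔ r.1 ∈ annIdeal φ' ∧ p = 0 := Prod.mk_eq_zero.trans
      (and_congr_left' (Subtype.ext_iff.trans Ideal.Quotient.eq_zero_iff_mem))
    rw [LinearMap.mem_ker, LinearMap.mem_ker, hu, hv, hs, h.C_add_Y_mul_mem_iff hφ hp, and_comm,
      Submodule.coe_eq_zero]
  have hu : LinearMap.range u = truncQuot φ (i + 1) := by
    refine le_antisymm ?_ ?_
    · rintro - ⟨⟨r, p⟩, rfl⟩
      refine ⟨s (r, p), hs r p ▸ add_mem ?_ (Y_mul_mem_totalDegLE r.2), rfl⟩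
      exact C_mem_totalDegLE (Polynomial.degreeLT_mono (min_le_left _ _) p.2)
    · rintro - ⟨f, hf, rfl⟩
      obtain ⟨p, hp, r, hr, hfr⟩ := h.exists_sub_mem_of_mem_totalDegLE hf
      exact ⟨(⟨r, hr⟩, ⟨p, hp⟩), (Ideal.Quotient.eq.mpr (hs ⟨r, hr⟩ ⟨p, hp⟩ ▸ hfr)).symm⟩
  have hv : LinearMap.range v = ⊤ := LinearMap.range_eq_top.mpr
    ((LinearMap.submoduleMap_surjective _ _).prodMap Function.surjective_id)
  have hrank := finrank_range_eq_of_ker_eq (V := totalDegLE K i × D) hker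
  rw [hu, hv, finrank_top, Module.finrank_prod, finrank_degreeLT] at hrank
  exact hrank

end Affine

/-! ### Linkage -/

section Linkage

open scoped Polynomial.Bivariate Polynomial

variable {φ φ' : K[X][Y] →ₗ[K] K} {H H' Q Q' : K[X][Y]} {M N k : ℕ}

theorem exists_functional_extension (φ' : K[X][Y] →ₗ[K] K) (ψ : K[X] →ₗ[K] K) :
    ∃ φ : K[X][Y] →ₗ[K] K, (∀ r, φ (Y * r) = φ' r) ∧ ∀ p, φ (Polynomial.C p) = ψ p := by
  let divY : K[X][Y] →ₗ[K] K[X][Y] :=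
    { toFun := Polynomial.divX
      map_add' := fun _ _ => Polynomial.divX_add
      map_smul' := fun c f => by ext; simp [Polynomial.coeff_divX] }
  let coeffZero : K[X][Y] →ₗ[K] K[X] := (Polynomial.lcoeff K[X] 0).restrictScalars K
  refine ⟨φ' ∘ₗ divY + ψ ∘ₗ coeffZero, fun r => ?_, fun p => ?_⟩
  · have hdiv : (Y * r).divX = r := by
      ext
      simp [Polynomial.coeff_divX]
    simp [divY, coeffZero, hdiv]
  · simp [divY, coeffZero]

theorem C_add_Y_mul_mem_annIdeal {q : K[X]} (hφ : ∀ r, φ (Y * r) = φ' r)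
    (hq : Polynomial.C q + Y * H ∈ annIdeal φ')
    (hC : ∀ p, φ (Polynomial.C (q * p)) = -φ' (H * Polynomial.C p)) :
    Polynomial.C q + Y * H ∈ annIdeal φ := fun f => by
  have hsplit : (Polynomial.C q + Y * H) * f = Y * ((Polynomial.C q + Y * H) * f.divX) +
      (Polynomial.C (q * f.coeff 0) + Y * (H * Polynomial.C (f.coeff 0))) := by
    conv_lhs => rw [← Polynomial.X_mul_divX_add f]
    rw [map_mul]
    ring
  rw [hsplit, map_add, map_add, hφ, hφ, hC, hq, zero_add, neg_add_cancel]

theorem IsCIPair.of_extension (hφ : ∀ r, φ (Y * r) = φ' r)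
    (hG : Polynomial.C (Polynomial.X ^ (N + 1)) + Y * H ∈ annIdeal φ) (hQ : Q ∈ annIdeal φ')
    (hne : Polynomial.C (Polynomial.X ^ N) * Q ∉ annIdeal φ) (hH : H ∈ totalDegLE K N)
    (hQN : Q ∈ totalDegLE K N)
    (hrep : ∀ f, ∃ f', Y * f' ∈ totalDegLE K N ∧ f - f' ∈ annIdeal φ') : IsCIPair φ H Q N := by
  refine ⟨hG, (Y_mul_mem_annIdeal_iff hφ).mpr hQ, hne, hH, hQN, fun f => ?_⟩
  have hrem := C_sub_mem_of_add_mem hG (f.coeff 0)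
  obtain ⟨r, hr, hfr⟩ := hrep (f.divX - H * Polynomial.C (f.coeff 0 /ₘ Polynomial.X ^ (N + 1)))
  refine ⟨_, add_mem (C_mem_totalDegLE (modByMonic_X_pow_mem_degreeLT (f.coeff 0) _)) hr, ?_⟩
  convert add_mem hrem ((Y_mul_mem_annIdeal_iff hφ).mpr hfr) using 1
  linear_combination -(Polynomial.X_mul_divX_add f)

theorem exists_isCIPair_base (K : Type*) [Field K] (N : ℕ) :
    ∃ φ : K[X][Y] →ₗ[K] K, IsCIPair φ 0 1 N ∧ ∀ r, φ (Y * r) = (0 : K[X][Y] →ₗ[K] K) r := by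
  obtain ⟨φ, hφ, hC⟩ := exists_functional_extension 0 (Polynomial.lcoeff K N)
  have hone : (1 : K[X][Y]) ∈ totalDegLE K N := by
    simpa using totalDegLE_mono N.zero_le (C_X_pow_mem_totalDegLE (K := K) 0)
  refine ⟨φ, IsCIPair.of_extension hφ (C_add_Y_mul_mem_annIdeal hφ (fun _ => rfl) fun p => ?_)
    (fun _ => rfl) (fun hN => ?_) (zero_mem _) hone fun f => ⟨0, ?_, fun _ => rfl⟩, hφ⟩
  · rw [hC, Polynomial.lcoeff_apply, Polynomial.coeff_X_pow_mul', if_neg (by omega),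
      LinearMap.zero_apply, neg_zero]
  · have hφN : φ (Polynomial.C (Polynomial.X ^ N)) = 0 := by simpa only [mul_one] using hN 1
    simp [hC, -map_pow] at hφN
  · rw [mul_zero]
    exact zero_mem _

theorem IsCIPair.exists_step (h : IsCIPair φ' H' Q' M) (hMN : M < N) :
    ∃ φ : K[X][Y] →ₗ[K] K, ∃ H,
      IsCIPair φ H (Polynomial.C (Polynomial.X ^ (M + 1)) + Y * H') N ∧
        ∀ r, φ (Y * r) = φ' r := by
  obtain ⟨d, rfl⟩ := Nat.exists_eq_add_of_le' hMN.le
  set Q := Polynomial.C (Polynomial.X ^ (M + 1)) + Y * H' with hQ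
  set H := Polynomial.C (Polynomial.X ^ d) * H' - Q' with hH
  have hlink : Polynomial.C (Polynomial.X ^ (d + M + 1)) + Y * H =
      Polynomial.C (Polynomial.X ^ d) * Q - Y * Q' := by
    rw [hH, hQ, add_assoc, pow_add, map_mul]
    ring
  obtain ⟨ρ, hρ⟩ := LinearMap.exists_leftInverse_of_injective
    (LinearMap.mulLeft K (Polynomial.X ^ (d + M + 1) : K[X])) (LinearMap.ker_eq_bot.mpr
      (mul_right_injective₀ (pow_ne_zero _ Polynomial.X_ne_zero)))
  obtain ⟨φ, hφ, hC⟩ := exists_functional_extension φ' (-(φ' ∘ₗ LinearMap.mulLeft K H ∘ₗ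
    (IsScalarTower.toAlgHom K K[X] K[X][Y]).toLinearMap) ∘ₗ ρ)
  have hmem : Polynomial.C (Polynomial.X ^ (d + M + 1)) + Y * H ∈ annIdeal φ := by
    refine C_add_Y_mul_mem_annIdeal hφ ?_ fun p => ?_
    · rw [hlink]
      exact sub_mem (Ideal.mul_mem_left _ _ h.left_mem) h.right_mem
    · have hp : ρ (Polynomial.X ^ (d + M + 1) * p) = p := LinearMap.congr_fun hρ p
      rw [hC]
      simp [hp]
  refine ⟨φ, H, IsCIPair.of_extension hφ hmem h.left_mem (fun hN => h.notMem ?_) ?_ ?_ fun f => ?_,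
    hφ⟩
  · rw [← Y_mul_mem_annIdeal_iff hφ]
    convert sub_mem hN (Ideal.mul_mem_left _ (Polynomial.C (Polynomial.X ^ M)) hmem) using 1
    rw [hlink, pow_add, map_mul]
    ring
  · exact sub_mem (mul_mem_totalDegLE (C_X_pow_mem_totalDegLE d) h.left_mem_totalDegLE)
      (totalDegLE_mono hMN.le h.right_mem_totalDegLE)
  · exact totalDegLE_mono hMN (add_mem (C_X_pow_mem_totalDegLE _)
      (Y_mul_mem_totalDegLE h.left_mem_totalDegLE))
  · obtain ⟨f', hf', hff'⟩ := h.exists_sub_mem f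
    exact ⟨f', totalDegLE_mono hMN (Y_mul_mem_totalDegLE hf'), hff'⟩

theorem truncQuot_zero_left (i : ℕ) : truncQuot (0 : K[X][Y] →ₗ[K] K) i = ⊥ :=
  eq_bot_iff.mpr (Submodule.map_le_iff_le_comap.mpr fun _ _ =>
    Ideal.Quotient.eq_zero_iff_mem.mpr fun _ => rfl)

theorem IsCIPair.finrank_truncQuot_zero_right (h : IsCIPair φ H Q N) :
    Module.finrank K (truncQuot φ 0) = 1 := by
  have hne : annIdeal φ ≠ ⊤ := fun htop => h.notMem (htop ▸ Submodule.mem_top)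
  have := Ideal.Quotient.nontrivial_iff.mpr hne
  rw [truncQuot, totalDegLE, homogeneousSubmodule_zero, Submodule.map_one, Submodule.map_one,
    Submodule.one_eq_span, finrank_span_singleton one_ne_zero]

theorem IsOSeqTwo.exists_pos_iff {δ : ℕ → ℕ} (h : IsOSeqTwo δ) (h0 : δ 0 ≠ 0)
    (hk : δ k = 0) : ∃ N, ∀ i, 0 < δ i ↔ i ≤ N := by
  have hex : ∃ k, δ k = 0 := ⟨k, hk⟩
  obtain ⟨N, hN⟩ := Nat.exists_eq_succ_of_ne_zero (mt (Nat.find_eq_zero hex).mp h0)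
  refine ⟨N, fun i => ⟨fun hi => ?_, fun hi => Nat.pos_of_ne_zero (Nat.find_min hex (by omega))⟩⟩
  by_contra! hNi
  have hfind := Nat.find_spec hex
  have := h.le_of_le (i := Nat.find hex) (k := i) (by omega) (by omega)
  omega

theorem IsOSeqTwo.sub_one {δ : ℕ → ℕ} (h : IsOSeqTwo δ) : IsOSeqTwo fun i => δ (i + 1) - 1 := by
  refine ⟨fun i => ?_, fun i hi => ?_⟩
  · have := h.1 (i + 1)
    dsimp only
    omega
  · have := h.2 (i + 1)
    dsimp only at hi ⊢
    omega

theorem sum_range_succ_eq_add_min {δ : ℕ → ℕ} (h0 : δ 0 = 1) (hδ : ∀ i, 0 < δ i ↔ i ≤ N) (i : ℕ) :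
    ∑ k ∈ Finset.range (i + 1), δ k =
      ∑ k ∈ Finset.range i, (δ (k + 1) - 1) + min (i + 1) (N + 1) := by
  induction i with
  | zero => simp [h0]
  | succ i ih =>
    rw [Finset.sum_range_succ, ih, Finset.sum_range_succ]
    have := hδ (i + 1)
    omega

theorem IsCIPair.finrank_truncQuot_eq_sum (h : IsCIPair φ H Q N) (hφ : ∀ r, φ (Y * r) = φ' r)
    {δ : ℕ → ℕ} (h0 : δ 0 = 1) (hδ : ∀ i, 0 < δ i ↔ i ≤ N)
    (hφ' : ∀ i, Module.finrank K (truncQuot φ' i) = ∑ k ∈ Finset.range (i + 1), (δ (k + 1) - 1))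
    (i : ℕ) : Module.finrank K (truncQuot φ i) = ∑ k ∈ Finset.range (i + 1), δ k := by
  rcases i with - | i
  · rw [h.finrank_truncQuot_zero_right, zero_add, Finset.sum_range_one, h0]
  · rw [h.finrank_truncQuot_succ hφ, hφ', sum_range_succ_eq_add_min h0 hδ]

theorem exists_isCIPair (K : Type*) [Field K] {δ : ℕ → ℕ} (h : IsOSeqTwo δ)
    (hδ : ∀ i, 0 < δ i ↔ i ≤ N) : ∃ (φ : K[X][Y] →ₗ[K] K) (H Q : K[X][Y]), IsCIPair φ H Q N ∧
      ∀ i, Module.finrank K (truncQuot φ i) = ∑ k ∈ Finset.range (i + 1), δ k := by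
  induction N using Nat.strong_induction_on generalizing δ with
  | _ N ih =>
  have h0 : δ 0 = 1 := (h.1 0).antisymm ((hδ 0).mpr N.zero_le)
  by_cases h1 : δ 1 - 1 = 0
  · obtain ⟨φ, hP, hφ⟩ := exists_isCIPair_base K N
    refine ⟨φ, 0, 1, hP, hP.finrank_truncQuot_eq_sum hφ h0 hδ fun i => ?_⟩
    rw [truncQuot_zero_left, finrank_bot, Finset.sum_eq_zero fun k _ => ?_]
    exact Nat.le_zero.mp ((h.sub_one.le_of_le h1.le k.zero_le).trans_eq h1)
  · have hN : δ (N + 1) - 1 = 0 := by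
      have := hδ (N + 1)
      omega
    obtain ⟨M, hM⟩ := h.sub_one.exists_pos_iff h1 hN
    have hMN : M < N := by
      have := hM M
      have := hδ (M + 1)
      omega
    obtain ⟨φ', H', Q', hP', hrank⟩ := ih M hMN h.sub_one hM
    obtain ⟨φ, H, hP, hφ⟩ := hP'.exists_step hMN
    exact ⟨φ, H, _, hP, hP.finrank_truncQuot_eq_sum hφ h0 hδ hrank⟩

end Linkage

/-! ### Homogenization -/

section Homogenization

open scoped Polynomial.Bivariate Polynomial

variable {φ : K[X][Y] →ₗ[K] K} {p : MvPolynomial (Fin 3) K} {b i j : ℕ}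

/-- The homogeneous functional of degree `j` on ternary forms that agrees with `φ` on
dehomogenized forms of degree `j`. -/
def homogenization (φ : K[X][Y] →ₗ[K] K) (j : ℕ) : MvPolynomial (Fin 3) K →ₗ[K] K :=
  (φ ∘ₗ (dehomog K).toLinearMap) ∘ₗ homogeneousComponent j

theorem isHomogFunctional_homogenization (φ : K[X][Y] →ₗ[K] K) (j : ℕ) :
    IsHomogFunctional (homogenization φ j) j :=
  isHomogFunctional_comp_homogeneousComponent _ j

theorem homogenization_apply (hp : p.IsHomogeneous j) :
    homogenization φ j p = φ (dehomog K p) := by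
  rw [homogenization, LinearMap.comp_apply, homogeneousComponent_eq_self hp]
  rfl

theorem mem_annIdeal_homogenization_iff (hb : ∀ f, ∃ f' ∈ totalDegLE K b, f - f' ∈ annIdeal φ)
    (hp : p.IsHomogeneous i) :
    p ∈ annIdeal (homogenization φ (i + b)) ↔ dehomog K p ∈ annIdeal φ := by
  have hφ : ∀ q : MvPolynomial (Fin 3) K, q.IsHomogeneous b →
      homogenization φ (i + b) (p * q) = φ (dehomog K p * dehomog K q) := fun q hq => by
    rw [homogenization_apply (hp.mul hq), map_mul]
  constructor
  · intro h f
    obtain ⟨-, ⟨q, hq, rfl⟩, hfq⟩ := hb f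
    have hzero := hfq (dehomog K p)
    rw [mul_comm, mul_sub, map_sub, sub_eq_zero] at hzero
    exact hzero.trans ((hφ q hq).symm.trans (h q))
  · rw [(isHomogFunctional_homogenization φ _).mem_annIdeal_iff_forall_monomial hp]
    exact fun h d hd => (hφ _ (isHomogeneous_monomial _ hd)).trans (h _)

theorem hilbFn_annIdeal_homogenization
    (hb : ∀ f, ∃ f' ∈ totalDegLE K b, f - f' ∈ annIdeal φ) (i : ℕ) :
    hilbFn (annIdeal (homogenization φ (i + b))) i = Module.finrank K (truncQuot φ i) := by
  let s := (homogeneousSubmodule (Fin 3) K i).subtype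
  let g := (Ideal.Quotient.mkₐ K (annIdeal φ)).toLinearMap ∘ₗ (dehomog K).toLinearMap ∘ₗ s
  have hg : LinearMap.range g = truncQuot φ i := by
    rw [LinearMap.range_comp, LinearMap.range_comp, Submodule.range_subtype]
    rfl
  rw [← hg]
  exact hilbFn_eq_finrank_range (s := s) (Submodule.range_subtype _) fun p =>
    Ideal.Quotient.eq_zero_iff_mem.trans (mem_annIdeal_homogenization_iff hb p.2).symm

theorem IsOSeqTwo.exists_isAG {T δ : ℕ → ℕ} (hδ : IsOSeqTwo δ) (hT : IsFirstHalfDiff T δ j)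
    (h0 : T 0 = 1) (hsym : ∀ i ≤ j, T (j - i) = T i) (hvan : ∀ i, j < i → T i = 0) :
    ∃ I : Ideal (MvPolynomial (Fin 3) K), IsAG I ∧ ∀ i, hilbFn I i = T i := by
  have hδ0 : δ 0 ≠ 0 := by simp [hT.zero, h0]
  obtain ⟨N, hN⟩ := hδ.exists_pos_iff hδ0 (hT.eq_zero (j + 1) (by omega))
  have hNj : 2 * N ≤ j := not_lt.mp fun h => ((hN N).mpr le_rfl).ne' (hT.eq_zero N h)
  obtain ⟨φ, _, _, hP, hrank⟩ := exists_isCIPair K hδ hN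
  have hΦ := isHomogFunctional_homogenization φ j
  have hlow : ∀ i, 2 * i ≤ j → hilbFn (annIdeal (homogenization φ j)) i = T i := fun i hi => by
    obtain ⟨b, rfl⟩ := Nat.exists_eq_add_of_le (show i ≤ j by omega)
    rw [hilbFn_annIdeal_homogenization (fun f => ?_), hrank, hT.sum_eq hi]
    obtain ⟨f', hf', hff'⟩ := hP.exists_sub_mem f
    exact ⟨f', totalDegLE_mono (by omega) hf', hff'⟩
  refine ⟨_, hΦ.isAG fun hzero => ?_, fun i => ?_⟩
  · have hbot : hilbFn (annIdeal (homogenization φ j)) 0 = 0 :=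
      hilbFn_eq_zero_iff.mpr fun p _ q => by rw [hzero, LinearMap.zero_apply]
    rw [hlow 0 (by omega), h0] at hbot
    exact one_ne_zero hbot
  · rcases lt_or_ge j i with hij | hij
    · rw [hΦ.hilbFn_eq_zero hij, hvan i hij]
    rcases le_total (2 * i) j with hi | hi
    · exact hlow i hi
    · rw [← hsym i hij, ← hlow (j - i) (by omega)]
      exact IsHomogFunctional.hilbFn_annIdeal_symm ((Nat.add_sub_of_le hij).symm ▸ hΦ)

end Homogenization

theorem stmt2_general (T : ℕ → ℕ) (j : ℕ) (h0 : T 0 = 1) (h1 : T 1 ≤ 3)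
    (hsym : ∀ i ≤ j, T (j - i) = T i) (hvan : ∀ i, j < i → T i = 0) :
    (∃ I : Ideal (MvPolynomial (Fin 3) K), IsAG I ∧ ∀ i, hilbFn I i = T i) ↔
    IsOSequence K (fun i =>
      if i = 0 then 1 else if 2 * i ≤ j then (T i : ℤ) - (T (i - 1) : ℤ) else 0) := by
  rw [isOSequence_firstHalfDiff_iff h0 h1]
  constructor
  · rintro ⟨I, hI, hT⟩
    obtain rfl := funext hT
    refine hI.exists_isFirstHalfDiff ?_ hvan
    rw [← Nat.sub_zero j, hsym 0 j.zero_le, h0]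
    exact one_ne_zero
  · rintro ⟨δ, hO, hδ⟩
    exact hO.exists_isAG hδ h0 hsym hvan

/-- Stanley: a symmetric sequence `T = (1, 3, t_2, …, 3, 1)` of socle
degree `j` is the Hilbert function of a codimension three standard graded Artinian
Gorenstein algebra iff its first-half difference sequence
`ΔT = (1, t_1 - 1, …, t_{⌊j/2⌋} - t_{⌊j/2⌋-1})` is an O-sequence (i.e. `T` is an
SI-sequence). -/
theorem stmt2 (T : ℕ → ℕ) (j : ℕ) (hj : 2 ≤ j)
    (h0 : T 0 = 1) (h1 : T 1 = 3)
    (hsym : ∀ i ≤ j, T (j - i) = T i) (hvan : ∀ i, j < i → T i = 0) :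
    (∃ I : Ideal (MvPolynomial (Fin 3) K), IsAG I ∧ ∀ i, hilbFn I i = T i) ↔
    IsOSequence K (fun i =>
      if i = 0 then 1 else if 2 * i ≤ j then (T i : ℤ) - (T (i - 1) : ℤ) else 0) :=
  stmt2_general T j h0 h1.le hsym hvan
end
end
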